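/- arXiv:1701.08949 — 2 statements merged into one kernel-verified Lean document; each statement's English description precedes it below -/
import Mathlib

section
/- Let V be a variety whose 2-generated free algebra F_V(2) is finite. The following are equivalent: (1) V has a single term c(x,y,z) which is a weak n-difference term for V for every n ≥ 2; (2) V has an idempotent ternary term which restricts to a Mal'cev operation on every block of every supernilpotent congruence of every member of V; (3) V has a weak difference term. -/
set_option autoImplicit false

namespace UA

/-- A signature: a type of operation symbols, each with a finite arity. -/
structure Signature : Type 1 where
  ops : Type
  arity : ops → ℕ

/-- An algebra for a signature: a carrier set together with an interpretation
of every operation symbol. -/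
structure Algebra (σ : Signature) : Type 1 where
  carrier : Type
  interp : (o : σ.ops) → (Fin (σ.arity o) → carrier) → carrier

variable {σ : Signature}

/-- A congruence of an algebra: an equivalence relation compatible with all
basic operations. -/
structure Con (A : Algebra σ) : Type where
  r : A.carrier → A.carrier → Prop
  refl : ∀ a, r a a
  symm : ∀ {a b}, r a b → r b a
  trans : ∀ {a b c}, r a b → r b c → r a c
  compat : ∀ (o : σ.ops) (x y : Fin (σ.arity o) → A.carrier),
      (∀ i, r (x i) (y i)) → r (A.interp o x) (A.interp o y)

namespace Con

variable {A : Algebra σ}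

instance : LE (Con A) := ⟨fun c d => ∀ a b : A.carrier, c.r a b → d.r a b⟩
instance : LT (Con A) := ⟨fun c d => c ≤ d ∧ ¬ d ≤ c⟩

/-- The total congruence `1_A`. -/
def top : Con A where
  r := fun _ _ => True
  refl := fun _ => trivial
  symm := fun _ => trivial
  trans := fun _ _ => trivial
  compat := fun _ _ _ _ => trivial

/-- The identity congruence `0_A`. -/
def bot : Con A where
  r := fun a b => a = b
  refl := fun _ => rfl
  symm := fun h => h.symm
  trans := fun h h' => h.trans h'
  compat := fun o _ _ h => congrArg (A.interp o) (funext h)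

/-- Meet of an arbitrary family of congruences (intersection). -/
def sInf (S : Set (Con A)) : Con A where
  r a b := ∀ c ∈ S, c.r a b
  refl a c _ := c.refl a
  symm h c hc := c.symm (h c hc)
  trans h h' c hc := c.trans (h c hc) (h' c hc)
  compat o x y h c hc := c.compat o x y (fun i => h i c hc)

/-- Binary meet of congruences. -/
def inf (c d : Con A) : Con A where
  r a b := c.r a b ∧ d.r a b
  refl a := ⟨c.refl a, d.refl a⟩
  symm h := ⟨c.symm h.1, d.symm h.2⟩
  trans h h' := ⟨c.trans h.1 h'.1, d.trans h.2 h'.2⟩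
  compat o x y h := ⟨c.compat o x y fun i => (h i).1, d.compat o x y fun i => (h i).2⟩

/-- The congruence generated by a set of pairs. -/
def conGen (S : Set (A.carrier × A.carrier)) : Con A :=
  sInf {c : Con A | ∀ p ∈ S, c.r p.1 p.2}

/-- Binary join of congruences. -/
def sup (c d : Con A) : Con A := conGen {p | c.r p.1 p.2 ∨ d.r p.1 p.2}

/-- Join of a family of congruences. -/
def iSup {I : Type} (f : I → Con A) : Con A := conGen {p | ∃ i, (f i).r p.1 p.2}

/-- Composition of congruences as binary relations. -/
def comp (c d : Con A) (a b : A.carrier) : Prop := ∃ x, c.r a x ∧ d.r x b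

/-- `d` covers `c` in the congruence lattice. -/
def Covers (c d : Con A) : Prop := c < d ∧ ∀ e : Con A, c < e → e ≤ d → e = d

theorem le_sup_right {c d : Con A} : d ≤ sup c d :=
  fun a b h e he => he (a, b) (Or.inr h)

def toSetoid (c : Con A) : Setoid A.carrier := ⟨c.r, ⟨c.refl, c.symm, c.trans⟩⟩

end Con

/-- The quotient algebra `A/γ`. -/
noncomputable def quotAlg (A : Algebra σ) (γ : Con A) : Algebra σ where
  carrier := Quotient γ.toSetoid
  interp o x := Quotient.mk γ.toSetoid (A.interp o (fun i => (x i).out))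

/-- The quotient congruence `α/γ` for `γ ≤ α`. -/
noncomputable def Con.quot {A : Algebra σ} (α γ : Con A) (h : γ ≤ α) : Con (quotAlg A γ) where
  r x y := Quotient.liftOn₂ x y (fun a b => α.r a b)
    (fun a b a' b' ha hb => propext
      ⟨fun hr => α.trans (α.symm (h _ _ ha)) (α.trans hr (h _ _ hb)),
       fun hr => α.trans (h _ _ ha) (α.trans hr (α.symm (h _ _ hb)))⟩)
  refl x := Quotient.inductionOn x fun a => α.refl a
  symm {x y} h' := Quotient.inductionOn₂ x y (fun _ _ hab => α.symm hab) h'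
  trans {x y z} h1 h2 :=
    Quotient.inductionOn₃ x y z (fun _ _ _ hab hbc => α.trans hab hbc) h1 h2
  compat o x y hxy := by
    show α.r (A.interp o fun i => (x i).out) (A.interp o fun i => (y i).out)
    refine α.compat o _ _ fun i => ?_
    have h1 := hxy i
    rw [← Quotient.out_eq (x i), ← Quotient.out_eq (y i)] at h1
    exact h1

/-- The polynomial operations of an algebra: the clone generated by the basic
operations, the projections and the constants. -/
inductive IsPolynomial (A : Algebra σ) : {n : ℕ} → ((Fin n → A.carrier) → A.carrier) → Prop
  | proj {n : ℕ} (i : Fin n) : IsPolynomial A (fun x => x i)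
  | const {n : ℕ} (a : A.carrier) : IsPolynomial A (fun _ : Fin n → A.carrier => a)
  | app {n : ℕ} (o : σ.ops) (g : Fin (σ.arity o) → (Fin n → A.carrier) → A.carrier) :
      (∀ j, IsPolynomial A (g j)) → IsPolynomial A (fun x => A.interp o (fun j => g j x))

/-- Substituting, coordinatewise according to the grouping `g` and the choice
vector `ε`, the entries of `b` (where `ε` is `true`) or of `a` (where `ε` is `false`). -/
def chooseVec {β : Type} {N n : ℕ} (g : Fin N → Fin n) (a b : Fin N → β)
    (ε : Fin n → Bool) : Fin N → β :=
  fun i => if ε (g i) then b i else a i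

/-- The higher centralizer relation `C(α₁,…,αₙ,β;δ)` of Bulatov.  Polynomials with
grouped variables are modelled by a polynomial `p` of arity `N` together with a
grouping map `g : Fin N → Fin (n+1)`; the group `Fin.last n` is the `β`-group. -/
def Centralizes {A : Algebra σ} {n : ℕ} (α : Fin n → Con A) (β δ : Con A) : Prop :=
  ∀ (N : ℕ) (p : (Fin N → A.carrier) → A.carrier), IsPolynomial A p →
    ∀ (g : Fin N → Fin (n + 1)) (a b : Fin N → A.carrier),
      (∀ i, (Fin.lastCases (motive := fun _ => Con A) β α (g i)).r (a i) (b i)) →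
      (∀ ε : Fin n → Bool, ε ≠ (fun _ => true) →
        δ.r (p (chooseVec g a b (Fin.lastCases (motive := fun _ => Bool) false ε)))
            (p (chooseVec g a b (Fin.lastCases (motive := fun _ => Bool) true ε)))) →
      δ.r (p (chooseVec g a b (Fin.lastCases (motive := fun _ => Bool) false fun _ => true)))
          (p (chooseVec g a b (Fin.lastCases (motive := fun _ => Bool) true fun _ => true)))

/-- The higher commutator `[α₁,…,αₙ,β]`: the smallest congruence `δ` such that
`C(α₁,…,αₙ,β;δ)` holds. -/
def commutator {A : Algebra σ} {n : ℕ} (α : Fin n → Con A) (β : Con A) : Con A :=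
  Con.sInf {δ : Con A | Centralizes α β δ}

/-- The higher commutator of a nonempty list of congruences, with the convention
`[α] = α` for a single congruence. -/
def commList {A : Algebra σ} : {n : ℕ} → (Fin (n + 1) → Con A) → Con A
  | 0, γ => γ 0
  | (n+1), γ => commutator (fun j : Fin (n+1) => γ j.castSucc) (γ (Fin.last (n+1)))

/-- The `m`-fold commutator `[θ,…,θ]_m` (for `m ≥ 1`). -/
def nfold {A : Algebra σ} (θ : Con A) (m : ℕ) : Con A :=
  commList (fun _ : Fin (m - 1 + 1) => θ)

/-- The binary commutator `[c,d]`. -/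
def binComm {A : Algebra σ} (c d : Con A) : Con A := commutator (fun _ : Fin 1 => c) d

/-- The lower central series `(θ]ⁿ`. -/
def lcs {A : Algebra σ} (θ : Con A) : ℕ → Con A
  | 0 => θ
  | (k+1) => binComm θ (lcs θ k)

/-- The derived series `[θ]ⁿ`. -/
def derived {A : Algebra σ} (θ : Con A) : ℕ → Con A
  | 0 => θ
  | (k+1) => binComm (derived θ k) (derived θ k)

/-- An algebra is nilpotent if some term of the lower central series of `1_A` is `0_A`. -/
def Nilpotent (A : Algebra σ) : Prop := ∃ m, lcs (Con.top : Con A) m = Con.bot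

/-- An algebra is nilpotent of class `n` if `(1_A]ⁿ = 0_A`. -/
def NilpotentOfClass (A : Algebra σ) (n : ℕ) : Prop := lcs (Con.top : Con A) n = Con.bot

/-- A congruence is solvable if some term of its derived series is `0_A`. -/
def SolvableCon {A : Algebra σ} (θ : Con A) : Prop := ∃ m, derived θ m = Con.bot

/-- `A` is `n`-supernilpotent if `[1_A,…,1_A]_n = 0_A`. -/
def Supernilpotent (A : Algebra σ) (n : ℕ) : Prop := nfold (Con.top : Con A) n = Con.bot

/-- A polynomial `f` absorbs the tuple `a` to the element `c`. -/
def Absorbs (A : Algebra σ) {k : ℕ} (f : (Fin k → A.carrier) → A.carrier)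
    (a : Fin k → A.carrier) (c : A.carrier) : Prop :=
  ∀ b : Fin k → A.carrier, (∃ i, b i = a i) → f b = c

/-- Terms over a signature with variables in `X`. -/
inductive Term (σ : Signature) (X : Type) : Type
  | var : X → Term σ X
  | app : (o : σ.ops) → (Fin (σ.arity o) → Term σ X) → Term σ X

/-- Evaluation of a term in an algebra under an assignment of the variables. -/
def Term.eval {X : Type} (A : Algebra σ) (v : X → A.carrier) : Term σ X → A.carrier
  | Term.var x => v x
  | Term.app o t => A.interp o fun i => Term.eval A v (t i)

/-- Substitution of terms into a term. -/
def Term.subst {X Y : Type} : Term σ X → (X → Term σ Y) → Term σ Y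
  | Term.var x, s => s x
  | Term.app o t, s => Term.app o fun i => Term.subst (t i) s

/-- `A` possesses a Mal'cev term. -/
def HasMalcevTerm (A : Algebra σ) : Prop :=
  ∃ t : Term σ (Fin 3), ∀ a b : A.carrier,
    t.eval A ![a, b, b] = a ∧ t.eval A ![b, b, a] = a

/-- A class of algebras is a variety when it is the class of all models of a set
of identities. -/
def IsVariety (V : Algebra σ → Prop) : Prop :=
  ∃ E : Set (Term σ ℕ × Term σ ℕ),
    ∀ A : Algebra σ, V A ↔ ∀ e ∈ E, ∀ v : ℕ → A.carrier, e.1.eval A v = e.2.eval A v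

/-- Two terms are `V`-equivalent when they evaluate equally in every member of `V`. -/
def vSetoid (V : Algebra σ → Prop) (X : Type) : Setoid (Term σ X) where
  r t s := ∀ A : Algebra σ, V A → ∀ v : X → A.carrier, t.eval A v = s.eval A v
  iseqv := ⟨fun _ _ _ _ => rfl, fun h A hA v => (h A hA v).symm,
    fun h h' A hA v => (h A hA v).trans (h' A hA v)⟩

/-- The `V`-free algebra on the set `X` of generators. -/
noncomputable def freeAlg (V : Algebra σ → Prop) (X : Type) : Algebra σ where
  carrier := Quotient (vSetoid V X)
  interp o x := Quotient.mk (vSetoid V X) (Term.app o fun i => (x i).out)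

/-- The principal congruence `θ(a,b)` generated by the pair `(a,b)`. -/
def conPair (A : Algebra σ) (a b : A.carrier) : Con A := Con.conGen {(a, b)}

/-- A weak difference term for the class `V`. -/
def IsWeakDiffTerm (V : Algebra σ → Prop) (c : Term σ (Fin 3)) : Prop :=
  ∀ A : Algebra σ, V A → ∀ a b : A.carrier,
    (binComm (conPair A a b) (conPair A a b)).r (c.eval A ![a, b, b]) a ∧
    (binComm (conPair A a b) (conPair A a b)).r a (c.eval A ![b, b, a])

/-- A weak `n`-difference term for the class `V`. -/
def IsWeakNDiffTerm (V : Algebra σ → Prop) (n : ℕ) (c : Term σ (Fin 3)) : Prop :=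
  ∀ A : Algebra σ, V A → ∀ a b : A.carrier,
    (nfold (conPair A a b) n).r (c.eval A ![a, b, b]) a ∧
    (nfold (conPair A a b) n).r a (c.eval A ![b, b, a])

/-- Order-preserving maps on the congruence lattice. -/
def MonotoneCon {A : Algebra σ} (F : Con A → Con A) : Prop :=
  ∀ c d : Con A, c ≤ d → F c ≤ F d

/-- `p` is a weak `f`-term of `A` with respect to the interpretation `F`. -/
def IsWeakFTerm (A : Algebra σ) (F : Con A → Con A) (p : Term σ (Fin 3)) : Prop :=
  ∀ (θ : Con A) (a b : A.carrier), θ.r a b →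
    (F θ).r (p.eval A ![a, b, b]) a ∧ (F θ).r a (p.eval A ![b, b, a])

/-- `p` is a weak `f`-term for the class `V`. -/
def HasWeakFTermVariety (V : Algebra σ → Prop) (p : Term σ (Fin 3)) : Prop :=
  ∀ A : Algebra σ, V A → ∃ F : Con A → Con A, MonotoneCon F ∧ IsWeakFTerm A F p

/-- The set `T^θ_{n,f}(θ₁,…,θₙ)` of pairs coming from polynomials which
`f(θ)`-absorb on the cube `{ā₁,b̄₁}×⋯×{āₙ,b̄ₙ}`. -/
def TSet (A : Algebra σ) (F : Con A → Con A) (θ : Con A) {n : ℕ} (θs : Fin n → Con A) :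
    Set (A.carrier × A.carrier) :=
  {pr | ∃ (N : ℕ) (g : (Fin N → A.carrier) → A.carrier), IsPolynomial A g ∧
    ∃ (gr : Fin N → Fin n) (a b : Fin N → A.carrier),
      (∀ i, (θs (gr i)).r (a i) (b i)) ∧
      (∀ ε : Fin n → Bool, (∃ j, ε j = false) →
        (F θ).r (g (fun i => if ε (gr i) then b i else a i)) (g a)) ∧
      pr = (g b, g a)}

/-- Homomorphisms of algebras. -/
def IsHom (A B : Algebra σ) (h : A.carrier → B.carrier) : Prop :=
  ∀ (o : σ.ops) (x : Fin (σ.arity o) → A.carrier),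
    h (A.interp o x) = B.interp o (fun i => h (x i))

/-- The product of a family of algebras. -/
def prodAlg {I : Type} (As : I → Algebra σ) : Algebra σ where
  carrier := ∀ i, (As i).carrier
  interp o x i := (As i).interp o (fun j => x j i)

/-- The subuniverse generated by a subset. -/
inductive Gen (A : Algebra σ) (S : Set A.carrier) : A.carrier → Prop
  | base {a : A.carrier} : a ∈ S → Gen A S a
  | app (o : σ.ops) (x : Fin (σ.arity o) → A.carrier) :
      (∀ i, Gen A S (x i)) → Gen A S (A.interp o x)

/-- `A` possesses a Taylor term. -/
def HasTaylorTerm (A : Algebra σ) : Prop :=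
  ∃ (n : ℕ) (t : Term σ (Fin n)), 1 ≤ n ∧
    (∀ a : A.carrier, t.eval A (fun _ => a) = a) ∧
    ∀ i : Fin n, ∃ u v : Fin n → Bool, u i = true ∧ v i = false ∧
      ∀ x y : A.carrier,
        t.eval A (fun j => if u j then x else y) = t.eval A (fun j => if v j then x else y)

/-- The variety `V` possesses a Taylor term. -/
def VarietyHasTaylorTerm (V : Algebra σ → Prop) : Prop :=
  ∃ (n : ℕ) (t : Term σ (Fin n)), 1 ≤ n ∧
    (∀ A : Algebra σ, V A → ∀ a : A.carrier, t.eval A (fun _ => a) = a) ∧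
    ∀ i : Fin n, ∃ u v : Fin n → Bool, u i = true ∧ v i = false ∧
      ∀ A : Algebra σ, V A → ∀ x y : A.carrier,
        t.eval A (fun j => if u j then x else y) = t.eval A (fun j => if v j then x else y)

/-- `Ξ(θ)`: the smallest set of congruences containing `θ` and closed under
higher commutators (of arity at least 2) of its members. -/
inductive Xi {A : Algebra σ} (θ : Con A) : Con A → Prop
  | base : Xi θ θ
  | comm {k : ℕ} (γ : Fin (k + 2) → Con A) : (∀ j, Xi θ (γ j)) → Xi θ (commList γ)

/-- An expanded loop on the carrier `α` with extra operations indexed by `ι`. -/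
structure ExpLoop (ι : Type) (ar : ι → ℕ) (α : Type) : Type where
  mul : α → α → α
  ldiv : α → α → α
  rdiv : α → α → α
  zero : α
  extra : (i : ι) → (Fin (ar i) → α) → α
  ldiv_mul : ∀ x y, ldiv x (mul x y) = y
  mul_rdiv : ∀ x y, rdiv (mul x y) y = x
  mul_ldiv : ∀ x y, mul x (ldiv x y) = y
  rdiv_mul : ∀ x y, mul (rdiv x y) y = x
  zero_mul : ∀ x, mul zero x = x
  mul_zero : ∀ x, mul x zero = x

/-- Operation symbols of an expanded loop. -/
inductive LoopOp (ι : Type) : Type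
  | mul | ldiv | rdiv | zero
  | extra : ι → LoopOp ι

/-- The signature of an expanded loop. -/
@[reducible] def loopSig (ι : Type) (ar : ι → ℕ) : Signature where
  ops := LoopOp ι
  arity o := match o with
    | .mul => 2
    | .ldiv => 2
    | .rdiv => 2
    | .zero => 0
    | .extra i => ar i

/-- The algebra underlying an expanded loop. -/
def ExpLoop.toAlgebra {ι : Type} {ar : ι → ℕ} {α : Type} (L : ExpLoop ι ar α) :
    Algebra (loopSig ι ar) where
  carrier := α
  interp o := match o with
    | .mul => fun x => L.mul (x 0) (x 1)
    | .ldiv => fun x => L.ldiv (x 0) (x 1)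
    | .rdiv => fun x => L.rdiv (x 0) (x 1)
    | .zero => fun _ => L.zero
    | .extra i => L.extra i

/-- An expanded loop is of `n`-type. -/
def ExpLoop.IsNType {ι : Type} {ar : ι → ℕ} {α : Type} (L : ExpLoop ι ar α) (n : ℕ) : Prop :=
  (∀ p : Σ k : ℕ, (Fin k → α) → α,
      (∃ i : ι, p = ⟨ar i, L.extra i⟩) ↔
        (1 ≤ p.1 ∧ p.1 ≤ n - 1 ∧ IsPolynomial L.toAlgebra p.2 ∧
          Absorbs L.toAlgebra p.2 (fun _ => L.zero) L.zero)) ∧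
  (∀ f : (Fin (n - 1) → α) → α,
      IsPolynomial L.toAlgebra f → Absorbs L.toAlgebra f (fun _ => L.zero) L.zero →
      ∀ (j : Fin (n - 1)) (x : Fin (n - 1) → α) (u v : α),
        f (Function.update x j (L.mul u v)) =
          L.mul (f (Function.update x j u)) (f (Function.update x j v))) ∧
  (∀ k : ℕ, 2 ≤ k → k < n →
      commList (Fin.snoc (fun _ : Fin (n - k) => (Con.top : Con L.toAlgebra))
        (nfold Con.top k)) = Con.bot)

/-- `A` is polynomially equivalent to an `n`-type expanded loop on the same carrier. -/
def PolyEquivNTypeLoop (A : Algebra σ) (n : ℕ) : Prop :=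
  ∃ (ι : Type) (ar : ι → ℕ) (L : ExpLoop ι ar A.carrier),
    L.IsNType n ∧
    ∀ (k : ℕ) (f : (Fin k → A.carrier) → A.carrier),
      IsPolynomial A f ↔ IsPolynomial L.toAlgebra f

/-- Left-associated product of a list with initial value `c`. -/
def lprodFrom {β : Type} (mul : β → β → β) (c : β) (l : List β) : β := List.foldl mul c l

/-- Left-associated product of a list (with a default value for the empty list). -/
def lprodList {β : Type} (mul : β → β → β) (dflt : β) : List β → β
  | [] => dflt
  | a :: l => List.foldl mul a l

/-- Left-associated product of a nonempty tuple. -/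
def lassoc {β : Type} (mul : β → β → β) : {m : ℕ} → (Fin (m + 1) → β) → β
  | 0, y => y 0
  | (m+1), y => mul (lassoc mul (Fin.init y)) (y (Fin.last (m+1)))

/-- `A` has a representation of degree `n`. -/
def HasRepOfDegree (A : Algebra σ) (n : ℕ) : Prop :=
  ∃ (z : A.carrier) (r : (Fin 2 → A.carrier) → A.carrier),
    IsPolynomial A r ∧ (∀ x : A.carrier, r ![z, x] = x) ∧ (∀ x : A.carrier, r ![x, z] = x) ∧
    ∀ (k : ℕ) (f : (Fin k → A.carrier) → A.carrier), IsPolynomial A f →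
      ∃ (c : A.carrier) (R : ℕ → (Fin k → A.carrier) → A.carrier),
        (∀ m : ℕ, 1 ≤ m → m ≤ min k n →
          ∃ (l : List (Finset (Fin k)))
            (t : (S : Finset (Fin k)) → (Fin S.card → A.carrier) → A.carrier),
            l.Nodup ∧
            (∀ S : Finset (Fin k), S ∈ l ↔ S.card = m) ∧
            (∀ S ∈ l, IsPolynomial A (t S) ∧ Absorbs A (t S) (fun _ => z) z) ∧
            (∀ x : Fin k → A.carrier,
              R m x = lprodList (fun u v => r ![u, v]) z
                (l.map (fun S => t S (fun j => x ((S.orderIsoOfFin rfl j).val)))))) ∧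
        ∀ x : Fin k → A.carrier,
          f x = lprodFrom (fun u v => r ![u, v]) c
            ((List.range' 1 (min k n)).map (fun m => R m x))

/-- Products of `0`-absorbing polynomials (of arities between `lo` and `hi`)
in a given set of variables. -/
inductive ProdOfAbs {ι : Type} {ar : ι → ℕ} {α : Type} (L : ExpLoop ι ar α)
    (lo hi : ℕ) {I : Type} : ((I → α) → α) → Prop
  | base {p : ℕ} (h : (Fin p → α) → α) (sel : Fin p → I) :
      lo ≤ p → p ≤ hi → IsPolynomial L.toAlgebra h →
      Absorbs L.toAlgebra h (fun _ => L.zero) L.zero →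
      ProdOfAbs L lo hi (fun v => h (fun j => v (sel j)))
  | mul {F G : (I → α) → α} :
      ProdOfAbs L lo hi F → ProdOfAbs L lo hi G →
      ProdOfAbs L lo hi (fun v => L.mul (F v) (G v))

/-- The terms `q_m` (for `m ≥ 2`, `qSeq q (m-2)` is `q_m`):
`q₂ := q`, `q_{m+1}(x,y,z) := q(x, q_m(x,y,y), q_m(x,y,z))`. -/
def qSeq (q : Term σ (Fin 3)) : ℕ → Term σ (Fin 3)
  | 0 => q
  | (k+1) => q.subst ![Term.var 0, (qSeq q k).subst ![Term.var 0, Term.var 1, Term.var 1], qSeq q k]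



/-! ### Twins of unary polynomials and cubes -/

/-- Pairs of unary polynomials obtained from one polynomial by two `ρ`-related
tuples of parameters. -/
inductive Tw {A : Algebra σ} (ρ : Con A) :
    (A.carrier → A.carrier) → (A.carrier → A.carrier) → Prop
  | id : Tw ρ (fun z => z) (fun z => z)
  | const {a b : A.carrier} : ρ.r a b → Tw ρ (fun _ => a) (fun _ => b)
  | app (o : σ.ops) (f g : Fin (σ.arity o) → A.carrier → A.carrier) :
      (∀ j, Tw ρ (f j) (g j)) →
      Tw ρ (fun z => A.interp o fun j => f j z) (fun z => A.interp o fun j => g j z)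

/-- The cubes generated by `ρ`-edges. -/
inductive Cube {A : Algebra σ} (ρ : Con A) (n : ℕ) : ((Fin n → Bool) → A.carrier) → Prop
  | gen (i : Fin n) {a b : A.carrier} : ρ.r a b → Cube ρ n (fun ε => if ε i then b else a)
  | const (a : A.carrier) : Cube ρ n (fun _ => a)
  | app (o : σ.ops) (f : Fin (σ.arity o) → (Fin n → Bool) → A.carrier) :
      (∀ j, Cube ρ n (f j)) → Cube ρ n (fun ε => A.interp o fun j => f j ε)

section Core

variable {A : Algebra σ} {ρ α : Con A}

theorem Tw.left {f g : A.carrier → A.carrier} (h : Tw ρ f g) : Tw ρ f f := by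
  induction h with
  | id => exact Tw.id
  | const _ => exact Tw.const (ρ.refl _)
  | app o f g _ ih => exact Tw.app o f f ih

theorem Tw.right {f g : A.carrier → A.carrier} (h : Tw ρ f g) : Tw ρ g g := by
  induction h with
  | id => exact Tw.id
  | const _ => exact Tw.const (ρ.refl _)
  | app o f g _ ih => exact Tw.app o g g ih

theorem Tw.comp {f g f' g' : A.carrier → A.carrier} (h : Tw ρ f g) (h' : Tw ρ f' g') :
    Tw ρ (fun z => f (f' z)) (fun z => g (g' z)) := by
  induction h with
  | id => exact h'
  | const h => exact Tw.const h
  | app o f g _ ih => exact Tw.app o (fun j z => f j (f' z)) (fun j z => g j (g' z)) ih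

theorem Tw.iter {f g : A.carrier → A.carrier} (h : Tw ρ f g) (k : ℕ) :
    Tw ρ (fun z => f^[k] z) (fun z => g^[k] z) := by
  induction k with
  | zero => exact Tw.id
  | succ k ih =>
    simp only [Function.iterate_succ_apply']
    exact h.comp ih

theorem Tw.rel {f g : A.carrier → A.carrier} (h : Tw ρ f g) (z : A.carrier) :
    ρ.r (f z) (g z) := by
  induction h with
  | id => exact ρ.refl _
  | const h => exact h
  | app o f g _ ih => exact ρ.compat o _ _ ih

theorem Tw.pres {f g : A.carrier → A.carrier} (h : Tw ρ f g) (β : Con A) {x y : A.carrier}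
    (hxy : β.r x y) : β.r (f x) (f y) := by
  induction h with
  | id => exact hxy
  | const h => exact β.refl _
  | app o f g _ ih => exact β.compat o _ _ ih

theorem tw_poly {N : ℕ} {p : (Fin N → A.carrier) → A.carrier} (hp : IsPolynomial A p)
    (φ ψ : Fin N → A.carrier → A.carrier) (h : ∀ j, Tw ρ (φ j) (ψ j)) :
    Tw ρ (fun z => p fun j => φ j z) (fun z => p fun j => ψ j z) := by
  induction hp with
  | proj i => exact h i
  | const a => exact Tw.const (ρ.refl a)
  | app o g _ ih => exact Tw.app o _ _ ih

theorem cube_tw {n : ℕ} {f g : A.carrier → A.carrier} (h : Tw ρ f g)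
    {z : (Fin n → Bool) → A.carrier} (hz : Cube ρ n z) (i : Fin n) :
    Cube ρ n (fun ε => if ε i then f (z ε) else g (z ε)) := by
  induction h with
  | id => simpa using hz
  | const h => exact Cube.gen i (ρ.symm h)
  | app o f g _ ih =>
    have := Cube.app o _ ih
    convert this using 2 with ε
    split <;> rfl

theorem Cube.rel {n : ℕ} {z : (Fin n → Bool) → A.carrier} (hz : Cube ρ n z)
    (ε ε' : Fin n → Bool) : ρ.r (z ε) (z ε') := by
  induction hz with
  | gen i h =>
    beta_reduce
    split <;> split
    · exact ρ.refl _
    · exact ρ.symm h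
    · exact h
    · exact ρ.refl _
  | const a => exact ρ.refl a
  | app o f _ ih => exact ρ.compat o _ _ ih

theorem cube_rep [Finite A.carrier] (ρ : Con A) (n : ℕ) :
    ∃ (N : ℕ) (g : Fin N → Fin n) (a b : Fin N → A.carrier), (∀ i, ρ.r (a i) (b i)) ∧
      ∀ C, Cube ρ n C → ∃ p, IsPolynomial A p ∧ ∀ ε, C ε = p (chooseVec g a b ε) := by
  classical
  let I := {t : Fin n × A.carrier × A.carrier // ρ.r t.2.1 t.2.2}
  obtain ⟨N, ⟨E⟩⟩ := Finite.exists_equiv_fin I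
  refine ⟨N, fun i => (E.symm i).1.1, fun i => (E.symm i).1.2.1, fun i => (E.symm i).1.2.2,
    fun i => (E.symm i).2, ?_⟩
  intro C hC
  induction hC with
  | @gen i a b h =>
    refine ⟨_, IsPolynomial.proj (E ⟨(i, a, b), h⟩), fun ε => ?_⟩
    simp [chooseVec]
  | const a => exact ⟨_, IsPolynomial.const a, fun ε => rfl⟩
  | app o f _ ih =>
    choose p hp hpe using ih
    exact ⟨_, IsPolynomial.app o p hp, fun ε => by simp only [hpe]⟩

/-- The consequence of supernilpotence that is used: cubes with all but one entry equal
are constant modulo `α`. -/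
def CubeCond (ρ α : Con A) (n : ℕ) : Prop :=
  ∀ C, Cube ρ n C → ∀ c0, (∀ ε, ε ≠ (fun _ => true) → C ε = c0) → α.r c0 (C fun _ => true)

theorem cubeCond_of_centralizes [Finite A.carrier] {θ δ : Con A} {m : ℕ}
    (hc : Centralizes (fun _ : Fin m => θ) θ δ) (hρ : ρ ≤ θ)
    (hα : ∀ x y, ρ.r x y → δ.r x y → α.r x y) : CubeCond ρ α (m + 1) := by
  intro C hC c0 h0
  obtain ⟨N, g, a, b, hab, hrep⟩ := cube_rep ρ (m + 1)
  obtain ⟨p, hp, hpe⟩ := hrep C hC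
  have hl : ∀ (t : Bool) (ε : Fin m → Bool), ε ≠ (fun _ => true) →
      (Fin.lastCases (motive := fun _ => Bool) t ε : Fin (m + 1) → Bool) ≠ fun _ => true := by
    intro t ε hε h
    apply hε
    funext i
    have := congrFun h i.castSucc
    simpa using this
  have hf : (fun i => Fin.lastCases (motive := fun _ => Bool) false (fun _ => true) i :
      Fin (m + 1) → Bool) ≠ fun _ => true := by
    intro h
    have := congrFun h (Fin.last m)
    simp at this
  have ht : (fun i => Fin.lastCases (motive := fun _ => Bool) true (fun _ => true) i :
      Fin (m + 1) → Bool) = fun _ => true := by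
    funext i
    refine Fin.lastCases ?_ (fun i => ?_) i <;> simp
  have key := hc N p hp g a b (by
      intro i
      have : ∀ j : Fin (m + 1), (Fin.lastCases (motive := fun _ => Con A) θ (fun _ => θ) j) = θ := by
        intro j
        refine Fin.lastCases ?_ (fun i => ?_) j <;> simp
      rw [this]
      exact hρ _ _ (hab i)) (by
      intro ε hε
      rw [← hpe, ← hpe, h0 _ (hl _ _ hε), h0 _ (hl _ _ hε)]
      exact δ.refl _)
  have e1 := hpe (fun i => Fin.lastCases (motive := fun _ => Bool) false (fun _ => true) i)
  have e2 := hpe (fun i => Fin.lastCases (motive := fun _ => Bool) true (fun _ => true) i)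
  rw [← e1, ← e2, ht, h0 _ hf] at key
  refine hα _ _ ?_ key
  rw [← h0 _ hf]
  exact hC.rel _ _

theorem cube_iter {n : ℕ} (H : CubeCond ρ α n) {f g : A.carrier → A.carrier}
    (h : Tw ρ f g) {x : A.carrier} (h1 : f x = x) (h2 : g (g x) = g x) (h3 : f (g x) = g x) :
    α.r (g x) x := by
  classical
  have : ∀ k, ∃ z, Cube ρ n z ∧
      ∀ ε, z ε = if ∀ i : Fin n, i.val < k → ε i = true then x else g x := by
    intro k
    induction k with
    | zero => exact ⟨_, Cube.const x, fun ε => by simp⟩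
    | succ k ih =>
      obtain ⟨z, hz, hze⟩ := ih
      by_cases hk : k < n
      · refine ⟨_, cube_tw h hz ⟨k, hk⟩, fun ε => ?_⟩
        have hiff : (∀ i : Fin n, i.val < k + 1 → ε i = true) ↔
            ((∀ i : Fin n, i.val < k → ε i = true) ∧ ε ⟨k, hk⟩ = true) := by
          constructor
          · intro hh
            exact ⟨fun i hi => hh i (by omega), hh _ (by simp)⟩
          · rintro ⟨ha, hb⟩ i hi
            rcases Nat.lt_succ_iff_lt_or_eq.1 hi with hi | hi
            · exact ha i hi
            · have : i = ⟨k, hk⟩ := Fin.ext hi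
              rw [this]; exact hb
        by_cases c1 : ∀ i : Fin n, i.val < k → ε i = true
        · have hz1 : z ε = x := by rw [hze, if_pos c1]
          by_cases c2 : ε ⟨k, hk⟩ = true
          · rw [if_pos (hiff.2 ⟨c1, c2⟩), hz1, if_pos c2, h1]
          · rw [if_neg (fun hh => c2 (hiff.1 hh).2), hz1, if_neg c2]
        · have hz1 : z ε = g x := by rw [hze, if_neg c1]
          rw [if_neg (fun hh => c1 (hiff.1 hh).1), hz1, h2, h3, ite_self]
      · refine ⟨z, hz, fun ε => ?_⟩
        rw [hze]
        have hiff : (∀ i : Fin n, i.val < k + 1 → ε i = true) ↔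
            (∀ i : Fin n, i.val < k → ε i = true) :=
          ⟨fun hh i hi => hh i (by omega), fun hh i _ => hh i (by omega)⟩
        simp only [hiff]
  obtain ⟨z, hz, hze⟩ := this n
  have := H z hz (g x) (fun ε hε => by
    rw [hze, if_neg]
    intro hh
    exact hε (funext fun i => hh i i.2))
  rw [hze] at this
  simpa using this

theorem exists_idem_exp (X : Type) [Finite X] :
    ∃ k : ℕ, 1 ≤ k ∧ ∀ (f : X → X) (x : X), f^[k] (f^[k] x) = f^[k] x := by
  obtain ⟨i, j, hij, he⟩ := Finite.exists_ne_map_eq_of_infinite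
    (fun n : ℕ => fun (f : X → X) => f^[n])
  wlog hlt : i < j generalizing i j
  · exact this j i hij.symm he.symm (by omega)
  obtain ⟨d, rfl⟩ := Nat.exists_eq_add_of_lt hlt
  have he' : ∀ (f : X → X), f^[i] = f^[i + d + 1] := fun f => congrFun he f
  have step : ∀ (f : X → X) (m : ℕ), i ≤ m → ∀ t, f^[m + t * (d + 1)] = f^[m] := by
    intro f m hm t
    induction t with
    | zero => simp
    | succ t ih =>
      rw [← ih]
      obtain ⟨r, rfl⟩ := Nat.exists_eq_add_of_le hm
      have : i + r + (t + 1) * (d + 1) = (r + t * (d + 1)) + (i + d + 1) := by ring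
      rw [this, Function.iterate_add, ← he', ← Function.iterate_add]
      congr 1
      ring
  refine ⟨(i + 1) * (d + 1), Nat.mul_pos (by omega) (by omega), fun f x => ?_⟩
  rw [← Function.iterate_add_apply, step f _ (by nlinarith)]

/-- Data of a minimal set `U = {x | e x = x}` for the pair `(α, ρ)`. -/
structure MinSet (ρ α : Con A) (e : A.carrier → A.carrier) : Prop where
  tw : Tw ρ e e
  idem : ∀ x, e (e x) = e x
  wit : ∃ x y, ρ.r x y ∧ e x = x ∧ e y = y ∧ ¬ α.r x y
  dich : ∀ f, Tw ρ f f → (∀ x, e (f x) = f x) →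
    (∀ x y, e x = x → e y = y → ρ.r x y → α.r (f x) (f y)) ∨
    (∀ x y, e x = x → e y = y → f x = f y → x = y)
  sep : ∀ x y, ρ.r x y → ¬ α.r x y → ∃ h, Tw ρ h h ∧ ¬ α.r (e (h x)) (e (h y))

theorem tuple_walk {n : ℕ} {X : Type} (R : (Fin n → X) → (Fin n → X) → Prop)
    (hr : ∀ t, R t t) (hs : ∀ t t', R t t' → R t' t)
    (ht : ∀ t t' t'', R t t' → R t' t'' → R t t'') (step : X → X → Prop)
    (hstep : ∀ t i x y, step x y → R (Function.update t i x) (Function.update t i y))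
    (a b : Fin n → X) (hab : ∀ i, Relation.EqvGen step (a i) (b i)) : R a b := by
  classical
  have h1 : ∀ t i x y, Relation.EqvGen step x y →
      R (Function.update t i x) (Function.update t i y) := by
    intro t i x y hxy
    induction hxy with
    | rel x y h => exact hstep t i x y h
    | refl x => exact hr _
    | symm x y _ ih => exact hs _ _ ih
    | trans x y z _ _ ih ih' => exact ht _ _ _ ih ih'
  have h2 : ∀ s : Finset (Fin n), R a (fun i => if i ∈ s then b i else a i) := by
    intro s
    induction s using Finset.induction_on with
    | empty => simpa using hr a
    | insert i s hi ih =>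
      refine ht _ _ _ ih ?_
      have := h1 (fun i => if i ∈ s then b i else a i) i _ _ (hab i)
      convert this using 1
      · funext j
        by_cases hj : j = i
        · subst hj; simp [hi]
        · simp [hj]
      · funext j
        by_cases hj : j = i
        · subst hj; simp
        · simp [hj]
  simpa using h2 Finset.univ

/-- Covering pair. -/
def Cov (α ρ : Con A) : Prop :=
  α ≤ ρ ∧ ¬ ρ ≤ α ∧ ∀ β : Con A, α ≤ β → β ≤ ρ → β ≤ α ∨ ρ ≤ β

theorem tw_app_update (ρ : Con A) (o : σ.ops) (t : Fin (σ.arity o) → A.carrier)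
    (i : Fin (σ.arity o)) :
    Tw ρ (fun z => A.interp o (Function.update t i z))
      (fun z => A.interp o (Function.update t i z)) := by
  have := Tw.app (ρ := ρ) o (fun j z => Function.update t i z j)
    (fun j z => Function.update t i z j) (by
      intro j
      by_cases hj : j = i
      · subst hj; simpa using Tw.id
      · simpa [hj] using Tw.const (ρ.refl _))
  exact this

theorem exists_minSet [Finite A.carrier] (hcov : Cov α ρ) : ∃ e, MinSet ρ α e := by
  classical
  obtain ⟨hle, hnle, hcov⟩ := hcov
  obtain ⟨k, hk1, hk⟩ := exists_idem_exp A.carrier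
  let P : (A.carrier → A.carrier) → Prop :=
    fun f => Tw ρ f f ∧ ∃ x y, ρ.r x y ∧ ¬ α.r (f x) (f y)
  have hne : ∃ f, P f := by
    refine ⟨fun z => z, Tw.id, ?_⟩
    by_contra hh
    push Not at hh
    exact hnle fun x y h => hh x y h
  obtain ⟨f, ⟨hf, x0, y0, hxy0, hfxy0⟩, hmin⟩ :=
    WellFounded.has_min (measure (fun f : A.carrier → A.carrier => (Set.range f).ncard)).wf
      {f | P f} hne
  have hmin' : ∀ g, P g → (Set.range f).ncard ≤ (Set.range g).ncard :=
    fun g hg => not_lt.1 (hmin g hg)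
  -- separation
  have hsep : ∀ x y, ρ.r x y → ¬ α.r x y → ∃ h, Tw ρ h h ∧ ¬ α.r (f (h x)) (f (h y)) := by
    let μ : Con A :=
      { r := fun x y => ρ.r x y ∧ ∀ h, Tw ρ h h → α.r (f (h x)) (f (h y))
        refl := fun x => ⟨ρ.refl x, fun h _ => α.refl _⟩
        symm := fun hh => ⟨ρ.symm hh.1, fun h hw => α.symm (hh.2 h hw)⟩
        trans := fun hh hh' =>
          ⟨ρ.trans hh.1 hh'.1, fun h hw => α.trans (hh.2 h hw) (hh'.2 h hw)⟩
        compat := by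
          intro o x y hxy
          refine tuple_walk (fun s t => ρ.r (A.interp o s) (A.interp o t) ∧
            ∀ h, Tw ρ h h → α.r (f (h (A.interp o s))) (f (h (A.interp o t))))
            (fun t => ⟨ρ.refl _, fun h _ => α.refl _⟩)
            (fun t t' hh => ⟨ρ.symm hh.1, fun h hw => α.symm (hh.2 h hw)⟩)
            (fun t t' t'' hh hh' =>
              ⟨ρ.trans hh.1 hh'.1, fun h hw => α.trans (hh.2 h hw) (hh'.2 h hw)⟩)
            (fun x y => ρ.r x y ∧ ∀ h, Tw ρ h h → α.r (f (h x)) (f (h y)))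
            ?_ x y (fun i => Relation.EqvGen.rel _ _ (hxy i))
          intro t i x y hxy
          exact ⟨(tw_app_update ρ o t i).pres ρ hxy.1,
            fun h hw => hxy.2 _ (hw.comp (tw_app_update ρ o t i))⟩ }
    have h1 : α ≤ μ := fun x y h => ⟨hle _ _ h, fun g hg => hf.pres α (hg.pres α h)⟩
    have h2 : μ ≤ ρ := fun x y h => h.1
    have h3 : μ ≤ α := by
      rcases hcov μ h1 h2 with h | h
      · exact h
      · exact absurd ((h _ _ hxy0).2 _ Tw.id) hfxy0
    intro x y hxy hn
    by_contra hh
    push Not at hh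
    exact hn (h3 x y ⟨hxy, hh⟩)
  obtain ⟨h, hh, hfh⟩ := hsep (f x0) (f y0) (hf.pres ρ hxy0) hfxy0
  have hfhf : P (fun z => f (h (f z))) := ⟨hf.comp (hh.comp hf), x0, y0, hxy0, hfh⟩
  -- a function mapping `range f` to a set of at least the same size is injective there
  have hinj : ∀ g : A.carrier → A.carrier, P (fun z => g (f z)) →
      Set.InjOn g (Set.range f) := by
    intro g hg
    have h1 := hmin' _ hg
    have h2 : Set.range (fun z => g (f z)) = g '' Set.range f := by
      rw [← Set.range_comp]; rfl
    rw [h2] at h1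
    exact Set.injOn_of_ncard_image_eq
      (le_antisymm (Set.ncard_image_le (Set.toFinite _)) h1) (Set.toFinite _)
  have hinj1 : Set.InjOn (fun z => f (h z)) (Set.range f) := hinj (fun z => f (h z)) hfhf
  have hmaps : Set.MapsTo (fun z => f (h z)) (Set.range f) (Set.range f) :=
    fun x _ => ⟨_, rfl⟩
  have hinjk : Set.InjOn ((fun z => f (h z))^[k]) (Set.range f) := hinj1.iterate hmaps k
  have hmapsk : ∀ x, (fun z => f (h z))^[k] x ∈ Set.range f := by
    intro x
    obtain ⟨k', rfl⟩ := Nat.exists_eq_add_of_le' hk1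
    rw [Function.iterate_succ_apply']
    exact ⟨_, rfl⟩
  have hfix : ∀ x ∈ Set.range f, (fun z => f (h z))^[k] x = x := by
    intro x hx
    exact hinjk (hmapsk x) hx (hk _ x)
  refine ⟨fun z => (fun z => f (h z))^[k] z, (hf.comp hh).iter k, hk _, ?_, ?_, ?_⟩
  · exact ⟨f x0, f y0, hf.pres ρ hxy0, hfix _ ⟨_, rfl⟩, hfix _ ⟨_, rfl⟩, hfxy0⟩
  · intro g hg hge
    by_cases hc : ∀ x y, (fun z => f (h z))^[k] x = x → (fun z => f (h z))^[k] y = y →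
        ρ.r x y → α.r (g x) (g y)
    · exact Or.inl hc
    · right
      push Not at hc
      obtain ⟨x, y, hx, hy, hxy, hn⟩ := hc
      have hx' : x ∈ Set.range f := hx ▸ hmapsk x
      have hy' : y ∈ Set.range f := hy ▸ hmapsk y
      have hsub : Set.range f ⊆ Set.range f := le_rfl
      have hPg : P (fun z => g ((fun z => f (h z))^[k] z)) :=
        ⟨hg.comp ((hf.comp hh).iter k), x, y, hxy, by simpa only [hx, hy] using hn⟩
      have h1 := hmin' _ hPg
      have h2 : Set.range (fun z => g ((fun z => f (h z))^[k] z)) ⊆ g '' Set.range f := by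
        rintro _ ⟨z, rfl⟩
        exact ⟨_, hmapsk z, rfl⟩
      have h3 := h1.trans (Set.ncard_le_ncard h2 (Set.toFinite _))
      have hI := Set.injOn_of_ncard_image_eq
        (le_antisymm (Set.ncard_image_le (Set.toFinite _)) h3) (Set.toFinite _)
      intro u v hu hv huv
      exact hI (hu ▸ hmapsk u) (hv ▸ hmapsk v) huv
  · intro x y hxy hn
    obtain ⟨h', hh', hnn⟩ := hsep x y hxy hn
    refine ⟨fun z => f (h' z), hf.comp hh', ?_⟩
    rw [hfix _ ⟨_, rfl⟩, hfix _ ⟨_, rfl⟩]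
    exact hnn

/-- Elementary steps inside `ρ`. -/
def Step (ρ α : Con A) (e : A.carrier → A.carrier) (x y : A.carrier) : Prop :=
  α.r x y ∨ ∃ g u v, Tw ρ g g ∧ e u = u ∧ e v = v ∧ ρ.r u v ∧ x = g u ∧ y = g v

theorem eqvGen_step (hcov : Cov α ρ) {e : A.carrier → A.carrier} (he : MinSet ρ α e)
    {x y : A.carrier} (hxy : ρ.r x y) : Relation.EqvGen (Step ρ α e) x y := by
  obtain ⟨hle, hnle, hcov⟩ := hcov
  let μ : Con A :=
    { r := Relation.EqvGen (Step ρ α e)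
      refl := Relation.EqvGen.refl
      symm := fun h => Relation.EqvGen.symm _ _ h
      trans := fun h h' => Relation.EqvGen.trans _ _ _ h h'
      compat := by
        intro o x y hxy
        refine tuple_walk (fun s t => Relation.EqvGen (Step ρ α e) (A.interp o s) (A.interp o t))
          (fun t => Relation.EqvGen.refl _) (fun t t' h => Relation.EqvGen.symm _ _ h)
          (fun t t' t'' h h' => Relation.EqvGen.trans _ _ _ h h') (Step ρ α e) ?_ x y hxy
        intro t i x y hxy
        apply Relation.EqvGen.rel
        rcases hxy with h | ⟨g, u, v, hg, hu, hv, huv, rfl, rfl⟩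
        · exact Or.inl ((tw_app_update ρ o t i).pres α h)
        · exact Or.inr ⟨_, u, v, (tw_app_update ρ o t i).comp hg, hu, hv, huv, rfl, rfl⟩ }
  have h1 : α ≤ μ := fun x y h => Relation.EqvGen.rel _ _ (Or.inl h)
  have h2 : μ ≤ ρ := by
    intro x y h
    induction h with
    | rel x y h =>
      rcases h with h | ⟨g, u, v, hg, hu, hv, huv, rfl, rfl⟩
      · exact hle _ _ h
      · exact hg.pres ρ huv
    | refl x => exact ρ.refl x
    | symm x y _ ih => exact ρ.symm ih
    | trans x y z _ _ ih ih' => exact ρ.trans ih ih'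
  rcases hcov μ h1 h2 with h | h
  · obtain ⟨u, v, huv, hu, hv, hn⟩ := he.wit
    exact absurd (h _ _ (Relation.EqvGen.rel _ _
      (Or.inr ⟨_, u, v, Tw.id, hu, hv, huv, rfl, rfl⟩))) hn
  · exact h _ _ hxy

/-- Injectivity on the minimal set. -/
def InjU (e f : A.carrier → A.carrier) : Prop :=
  ∀ x y, e x = x → e y = y → f x = f y → x = y

theorem iter_mem {e f : A.carrier → A.carrier} (hf : ∀ x, e (f x) = f x) (k : ℕ)
    {x : A.carrier} (hx : e x = x) : e (f^[k] x) = f^[k] x := by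
  cases k with
  | zero => exact hx
  | succ k => rw [Function.iterate_succ_apply']; exact hf _

theorem iter_fix {e f : A.carrier → A.carrier} {k : ℕ}
    (hk : ∀ (f : A.carrier → A.carrier) (x), f^[k] (f^[k] x) = f^[k] x)
    (hf : ∀ x, e (f x) = f x) (hi : InjU e f) {x : A.carrier} (hx : e x = x) :
    f^[k] x = x := by
  have : ∀ m, InjU e (f^[m]) := by
    intro m
    induction m with
    | zero => exact fun x y _ _ h => h
    | succ m ih =>
      intro x y hx hy h
      rw [Function.iterate_succ_apply', Function.iterate_succ_apply'] at h
      exact ih x y hx hy (hi _ _ (iter_mem hf m hx) (iter_mem hf m hy) h)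
  exact this k _ _ (iter_mem hf k hx) hx (hk f x)

theorem noSwitch [Finite A.carrier] {n : ℕ} (H : CubeCond ρ α n)
    {e : A.carrier → A.carrier} (he : MinSet ρ α e) {f g : A.carrier → A.carrier}
    (h : Tw ρ f g) (hf : ∀ x, e (f x) = f x) (hg : ∀ x, e (g x) = g x) (hi : InjU e f) :
    InjU e g := by
  obtain ⟨k, hk1, hk⟩ := exists_idem_exp A.carrier
  rcases he.dich g h.right hg with hc | hc
  swap
  · exact hc
  exfalso
  obtain ⟨x, y, hxy, hx, hy, hn⟩ := he.wit
  have key : ∀ x, e x = x → α.r (g^[k] x) x := by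
    intro x hx
    exact cube_iter H (h.iter k) (iter_fix hk hf hi hx) (hk g x)
      (iter_fix hk hf hi (iter_mem hg k hx))
  have h1 : α.r (g^[k] x) (g^[k] y) := by
    obtain ⟨k', rfl⟩ := Nat.exists_eq_add_of_le' hk1
    rw [Function.iterate_succ_apply, Function.iterate_succ_apply]
    exact (h.right.iter k').pres α (hc x y hx hy hxy)
  exact hn (α.trans (α.symm (key x hx)) (α.trans h1 (key y hy)))

/-- Binary operations acting on twins. -/
def Bi (ρ : Con A) (G : A.carrier → A.carrier → A.carrier) : Prop :=
  ∀ f f' g g', Tw ρ f f' → Tw ρ g g' → Tw ρ (fun z => G (f z) (g z)) (fun z => G (f' z) (g' z))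

/-- Operations in one variable and an `N`-tuple of variables, acting on twins. -/
def Mi (ρ : Con A) {N : ℕ} (F : A.carrier → (Fin N → A.carrier) → A.carrier) : Prop :=
  ∀ f f' (φ ψ : Fin N → A.carrier → A.carrier), Tw ρ f f' → (∀ j, Tw ρ (φ j) (ψ j)) →
    Tw ρ (fun z => F (f z) (fun j => φ j z)) (fun z => F (f' z) (fun j => ψ j z))

theorem Bi.iter {G : A.carrier → A.carrier → A.carrier} (hG : Bi ρ G) (k : ℕ) :
    Bi ρ (fun a b => (G a)^[k] b) := by
  intro f f' g g' hf hg
  induction k with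
  | zero => exact hg
  | succ k ih =>
    simp only [Function.iterate_succ_apply']
    exact hG _ _ _ _ hf ih

theorem Bi.comp {G : A.carrier → A.carrier → A.carrier} (hG : Bi ρ G)
    {h : A.carrier → A.carrier} (hh : Tw ρ h h) : Bi ρ (fun a b => h (G a b)) :=
  fun _ _ _ _ hf hg => hh.comp (hG _ _ _ _ hf hg)

theorem Mi.comp {N : ℕ} {F : A.carrier → (Fin N → A.carrier) → A.carrier} (hF : Mi ρ F)
    {h : A.carrier → A.carrier} (hh : Tw ρ h h) : Mi ρ (fun a b => h (F a b)) :=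
  fun _ _ _ _ hf hg => hh.comp (hF _ _ _ _ hf hg)

theorem Mi.tw {N : ℕ} {F : A.carrier → (Fin N → A.carrier) → A.carrier} (hF : Mi ρ F)
    {c d : Fin N → A.carrier} (h : ∀ j, ρ.r (c j) (d j)) :
    Tw ρ (fun z => F z c) (fun z => F z d) :=
  hF _ _ (fun j _ => c j) (fun j _ => d j) Tw.id (fun j => Tw.const (h j))

end Core

section Core2

variable {A : Algebra σ} {ρ α : Con A}

theorem lastCases_const {X : Type} {n : ℕ} (c : X) (j : Fin (n + 1)) :
    Fin.lastCases (motive := fun _ => X) c (fun _ => c) j = c := by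
  refine Fin.lastCases ?_ (fun i => ?_) j
  · rw [Fin.lastCases_last]
  · rw [Fin.lastCases_castSucc]

theorem poly_pres (β : Con A) {N : ℕ} {p : (Fin N → A.carrier) → A.carrier}
    (hp : IsPolynomial A p) {s t : Fin N → A.carrier} (h : ∀ i, β.r (s i) (t i)) :
    β.r (p s) (p t) := by
  induction hp with
  | proj i => exact h i
  | const a => exact β.refl a
  | app o g _ ih => exact β.compat o _ _ (fun j => ih j)

theorem exists_binary [Finite A.carrier] {n : ℕ} (hcov : Cov α ρ) (H : CubeCond ρ α n)
    {e : A.carrier → A.carrier} (he : MinSet ρ α e) {N : ℕ}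
    {F : A.carrier → (Fin N → A.carrier) → A.carrier} (hF : Mi ρ F)
    (hFe : ∀ z w, e (F z w) = F z w) {c d : Fin N → A.carrier}
    (hcd : ∀ j, ρ.r (c j) (d j)) (hinj : InjU e (fun z => F z c)) {y : A.carrier}
    (hn : ¬ α.r (F y c) (F y d)) :
    ∃ (G : A.carrier → A.carrier → A.carrier) (u : A.carrier), Bi ρ G ∧
      (∀ z w, e (G z w) = G z w) ∧ e u = u ∧ InjU e (G y) ∧ InjU e (fun z => G z u) := by
  classical
  by_contra hno
  have hw := tuple_walk
    (fun t t' => (∀ j, ρ.r (t j) (t' j)) ∧ ((∀ j, ρ.r (c j) (t j)) → α.r (F y t) (F y t')))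
    (fun t => ⟨fun j => ρ.refl _, fun _ => α.refl _⟩)
    (fun t t' h => ⟨fun j => ρ.symm (h.1 j), fun hc =>
      α.symm (h.2 fun j => ρ.trans (hc j) (ρ.symm (h.1 j)))⟩)
    (fun t t' t'' h h' => ⟨fun j => ρ.trans (h.1 j) (h'.1 j), fun hc =>
      α.trans (h.2 hc) (h'.2 fun j => ρ.trans (hc j) (h.1 j))⟩)
    (Step ρ α e) ?_ c d (fun i => eqvGen_step hcov he (hcd i))
  · exact hn (hw.2 fun j => ρ.refl _)
  have hupd : ∀ (β : Con A) (t : Fin N → A.carrier) i x y, β.r x y →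
      ∀ j, β.r (Function.update t i x j) (Function.update t i y j) := by
    intro β t i x y h j
    by_cases hj : j = i
    · subst hj; simpa using h
    · simpa [hj] using β.refl _
  have htw : ∀ (t : Fin N → A.carrier) (i : Fin N) g g', Tw ρ g g' →
      ∀ j, Tw ρ (fun z => Function.update t i (g z) j) (fun z => Function.update t i (g' z) j) := by
    intro t i g g' h j
    by_cases hj : j = i
    · subst hj; simpa using h
    · simpa [hj] using Tw.const (ρ.refl _)
  intro t i x x' hxx
  rcases hxx with h | ⟨g, u, v, hg, hu, hv, huv, rfl, rfl⟩
  · refine ⟨hupd ρ t i _ _ (hcov.1 _ _ h), fun _ => ?_⟩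
    have := hF (fun _ => y) (fun _ => y) _ _ (Tw.const (ρ.refl y)) (htw t i _ _ Tw.id)
    exact this.pres α h
  · refine ⟨hupd ρ t i _ _ (hg.pres ρ huv), fun hct => ?_⟩
    have hB : Bi ρ (fun z w => F z (Function.update t i (g w))) := by
      intro f f' g1 g2 hf hg1
      exact hF f f' _ _ hf (htw t i _ _ (hg.comp hg1))
    rcases he.dich (fun w => F y (Function.update t i (g w)))
      (hB _ _ _ _ (Tw.const (ρ.refl y)) Tw.id) (fun _ => hFe _ _) with hc | hc
    · exact hc u v hu hv huv
    · exfalso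
      exact hno ⟨_, u, hB, fun _ _ => hFe _ _, hu, hc,
        noSwitch H he (hF.tw hct) (fun _ => hFe _ _) (fun _ => hFe _ _) hinj⟩

theorem core_norm [Finite A.carrier] {n : ℕ} (hcov : Cov α ρ) (H : CubeCond ρ α n)
    {e : A.carrier → A.carrier} (he : MinSet ρ α e) {N : ℕ}
    {F : A.carrier → (Fin N → A.carrier) → A.carrier} (hF : Mi ρ F)
    (hFe : ∀ z w, e (F z w) = F z w) {c d : Fin N → A.carrier}
    (hcd : ∀ j, ρ.r (c j) (d j)) (hid : ∀ z, e z = z → F z c = z) {x y : A.carrier}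
    (hx : e x = x) (hy : e y = y) (hxy : ρ.r x y) (hF1 : α.r (F x c) (F x d))
    (hn : ¬ α.r (F y c) (F y d)) : False := by
  obtain ⟨k, hk1, hk⟩ := exists_idem_exp A.carrier
  obtain ⟨k, rfl⟩ := Nat.exists_eq_add_of_le' hk1
  obtain ⟨G, u, hG, hGe, hu, hGy, hGu⟩ : ∃ (G : A.carrier → A.carrier → A.carrier)
      (u : A.carrier), Bi ρ G ∧ (∀ z w, e (G z w) = G z w) ∧ e u = u ∧ InjU e (G y) ∧
      (∀ z, e z = z → G z u = z) := by
    obtain ⟨G, u, hG, hGe, hu, hGy, hGu⟩ := exists_binary hcov H he hF hFe hcd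
      (fun z w hz hw h => by simpa only [hid z hz, hid w hw] using h) hn
    have hπ : Tw ρ (fun z => G z u) (fun z => G z u) :=
      hG _ _ _ _ Tw.id (Tw.const (ρ.refl u))
    have hfix := fun a (ha : e a = a) => iter_fix hk (fun x => hGe x u) hGu ha
    refine ⟨fun z w => (fun z => G z u)^[k] (G z w), u, hG.comp (hπ.iter k),
      fun z w => iter_mem (fun x => hGe x u) k (hGe z w), hu, ?_, ?_⟩
    · intro w w' hw hw' h
      have h2 := congrArg (fun z => G z u) h
      simp only [← Function.iterate_succ_apply' (fun z => G z u)] at h2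
      rw [hfix _ (hGe _ _), hfix _ (hGe _ _)] at h2
      exact hGy _ _ hw hw' h2
    · intro z hz
      have := hfix z hz
      rwa [Function.iterate_succ_apply] at this
  have hGinj : ∀ b, ρ.r y b → InjU e (G b) := fun b hb =>
    noSwitch H he (hG _ _ _ _ (Tw.const hb) Tw.id) (hGe y) (hGe b) hGy
  have hL1 : ∀ b, ρ.r y b → ∀ a, e a = a → G b ((G b)^[k] a) = a := by
    intro b hb a ha
    have := iter_fix hk (hGe b) (hGinj b hb) ha
    rwa [Function.iterate_succ_apply'] at this
  have hL2 : ∀ b, e b = b → ρ.r y b → (G b)^[k] b = u := by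
    intro b hbe hb
    have := iter_fix hk (hGe b) (hGinj b hb) hu
    rwa [Function.iterate_succ_apply, hGu b hbe] at this
  have hcc : ∀ z, e z = z → ρ.r z y → ρ.r y (F z d) := by
    intro z hz hzy
    have h1 := (hF.tw hcd).rel z
    simp only [hid z hz] at h1
    exact ρ.trans (ρ.symm hzy) h1
  have hTd : Tw ρ (fun z => (G (F z d))^[k] (F y d)) (fun z => (G (F z d))^[k] (F y d)) :=
    hG.iter k _ _ _ _ (hF.tw fun j => ρ.refl _) (Tw.const (ρ.refl _))
  have hD : Tw ρ (fun z => G (F z c) ((G (F z d))^[k] (F y d)))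
      (fun z => G (F z d) ((G (F z d))^[k] (F y d))) :=
    hG _ _ _ _ (hF.tw hcd) hTd
  have hDx : G (F x d) ((G (F x d))^[k] (F y d)) = F y d :=
    hL1 _ (hcc x hx hxy) _ (hFe _ _)
  have hDy : G (F y d) ((G (F y d))^[k] (F y d)) = F y d :=
    hL1 _ (hcc y hy (ρ.refl y)) _ (hFe _ _)
  have hDcy : G (F y c) ((G (F y d))^[k] (F y d)) = F y c := by
    rw [hL2 _ (hFe _ _) (hcc y hy (ρ.refl y)), hGu _ (hFe _ _)]
  have hDcx : α.r (G (F x c) ((G (F x d))^[k] (F y d))) (F y d) := by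
    have h1 : Tw ρ (fun a => G a ((G (F x d))^[k] (F y d)))
      (fun a => G a ((G (F x d))^[k] (F y d))) := hG _ _ _ _ Tw.id (Tw.const (ρ.refl _))
    have := h1.pres α hF1
    simp only [hDx] at this
    exact this
  rcases he.dich _ hD.left (fun _ => hGe _ _) with hc | hc
  · have := hc x y hx hy hxy
    rw [hDcy] at this
    exact hn (α.trans (α.symm this) hDcx)
  · have := noSwitch H he hD (fun _ => hGe _ _) (fun _ => hGe _ _) hc x y hx hy
      (by simp only [hDx, hDy])
    subst this
    exact hn hF1

theorem core [Finite A.carrier] {n : ℕ} (hcov : Cov α ρ) (H : CubeCond ρ α n)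
    {e : A.carrier → A.carrier} (he : MinSet ρ α e) {N : ℕ}
    {F : A.carrier → (Fin N → A.carrier) → A.carrier} (hF : Mi ρ F)
    {c d : Fin N → A.carrier}
    (hcd : ∀ j, ρ.r (c j) (d j)) {x y : A.carrier}
    (hx : e x = x) (hy : e y = y) (hxy : ρ.r x y) (hF1 : α.r (F x c) (F x d)) :
    α.r (F y c) (F y d) := by
  by_contra hn
  obtain ⟨k, hk1, hk⟩ := exists_idem_exp A.carrier
  obtain ⟨k, rfl⟩ := Nat.exists_eq_add_of_le' hk1
  obtain ⟨h, hh, hn1⟩ := he.sep _ _ ((hF.tw hcd).rel y) hn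
  have hT : Tw ρ (fun z => e (h z)) (fun z => e (h z)) := he.tw.comp hh
  have hF' : Mi ρ (fun z w => e (h (F z w))) := hF.comp hT
  have hFe : ∀ z w, e (e (h (F z w))) = e (h (F z w)) := fun _ _ => he.idem _
  have hF1' : α.r (e (h (F x c))) (e (h (F x d))) := hT.pres α hF1
  generalize hFd : (fun z w => e (h (F z w))) = F' at hF'
  have hFd' : ∀ z w, e (h (F z w)) = F' z w := fun z w => by rw [← hFd]
  simp only [hFd'] at hFe hF1' hn1
  have hinj : InjU e (fun z => F' z c) := by
    rcases he.dich _ (hF'.tw hcd).left (fun _ => hFe _ _) with h1 | h1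
    · rcases he.dich _ (hF'.tw hcd).right (fun _ => hFe _ _) with h2 | h2
      · exact absurd (α.trans (α.symm (h1 x y hx hy hxy)) (α.trans hF1' (h2 x y hx hy hxy))) hn1
      · exact noSwitch H he (hF'.tw fun j => ρ.symm (hcd j)) (fun _ => hFe _ _)
          (fun _ => hFe _ _) h2
    · exact h1
  have hπ : Tw ρ (fun z => F' z c) (fun z => F' z c) := (hF'.tw hcd).left
  have hfix := fun a (ha : e a = a) => iter_fix hk (fun x => hFe x c) hinj ha
  refine core_norm hcov H he (hF'.comp (hπ.iter k))
    (fun z w => iter_mem (fun x => hFe x c) k (hFe z w)) hcd ?_ hx hy hxy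
    ((hπ.iter k).pres α hF1') ?_
  · intro z hz
    have := hfix z hz
    rwa [Function.iterate_succ_apply] at this
  · intro h
    have h2 := hπ.pres α h
    simp only [← Function.iterate_succ_apply' (fun z => F' z c)] at h2
    rw [hfix _ (hFe _ _), hfix _ (hFe _ _)] at h2
    exact hn1 h2

theorem abelian_of_cubeCond [Finite A.carrier] {n : ℕ} (hcov : Cov α ρ)
    (H : CubeCond ρ α n) : Centralizes (fun _ : Fin 1 => ρ) ρ α := by
  classical
  obtain ⟨e, he⟩ := exists_minSet hcov
  intro N p hp g a b hab hyp
  have hab' : ∀ i, ρ.r (a i) (b i) := by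
    intro i
    have := hab i
    rwa [lastCases_const] at this
  let mix : (Fin N → A.carrier) → (Fin N → A.carrier) → Fin N → A.carrier :=
    fun t w i => if g i = Fin.last 1 then w i else t i
  have hmix : ∀ s τ : Bool,
      chooseVec g a b (fun i => Fin.lastCases (motive := fun _ => Bool) s (fun _ => τ) i) =
      mix (if τ then b else a) (if s then b else a) := by
    intro s τ
    funext i
    simp only [chooseVec, mix]
    generalize g i = j
    refine Fin.lastCases ?_ (fun j => ?_) j
    · simp only [Fin.lastCases_last, if_true]
      cases s <;> rfl
    · simp only [Fin.lastCases_castSucc, if_neg (Fin.castSucc_ne_last j)]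
      cases τ <;> rfl
  have h0 := hyp (fun _ => false) (by
    intro h
    have := congrFun h 0
    simp at this)
  have h00 := hmix false false
  have h01 := hmix true false
  have h10 := hmix false true
  have h11 := hmix true true
  simp only [if_true, if_false, Bool.false_eq_true] at h00 h01 h10 h11
  rw [h00, h01] at h0
  rw [h10, h11]
  have hw := tuple_walk
    (fun t t' => α.r (p (mix t a)) (p (mix t b)) ↔ α.r (p (mix t' a)) (p (mix t' b)))
    (fun t => Iff.rfl) (fun t t' h => h.symm) (fun t t' t'' h h' => h.trans h')
    (Step ρ α e) ?_ a b (fun i => eqvGen_step hcov he (hab' i))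
  · exact hw.1 h0
  intro t i x x' hxx
  rcases hxx with h | ⟨f, u, v, hf, hu, hv, huv, rfl, rfl⟩
  · have h1 : ∀ w, α.r (p (mix (Function.update t i x) w)) (p (mix (Function.update t i x') w)) := by
      intro w
      apply poly_pres α hp
      intro j
      simp only [mix]
      split
      · exact α.refl _
      · by_cases hj : j = i
        · subst hj; simpa using h
        · simpa [hj] using α.refl _
    exact ⟨fun h2 => α.trans (α.symm (h1 a)) (α.trans h2 (h1 b)),
      fun h2 => α.trans (h1 a) (α.trans h2 (α.symm (h1 b)))⟩
  · have hM : Mi ρ (fun z w => p (mix (Function.update t i (f z)) w)) := by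
      intro f1 f2 φ ψ h1 h2
      apply tw_poly hp (fun j z => mix (Function.update t i (f (f1 z))) (fun j => φ j z) j)
        (fun j z => mix (Function.update t i (f (f2 z))) (fun j => ψ j z) j)
      intro j
      simp only [mix]
      split
      · exact h2 j
      · by_cases hj : j = i
        · subst hj; simpa using hf.comp h1
        · simpa [hj] using Tw.const (ρ.refl _)
    exact ⟨fun h => core hcov H he hM hab' hu hv huv h,
      fun h => core hcov H he hM hab' hv hu (ρ.symm huv) h⟩

end Core2

section General

variable {A B : Algebra σ}

theorem Con.ext' {c d : Con A} (h : c ≤ d) (h' : d ≤ c) : c = d := by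
  have hr : c.r = d.r := by
    funext a b
    exact propext ⟨h a b, h' a b⟩
  cases c
  cases d
  cases hr
  rfl

instance con_finite [Finite A.carrier] : Finite (Con A) := by
  refine Finite.of_injective (fun c : Con A => c.r) ?_
  intro c d h
  refine Con.ext' (fun a b hab => ?_) (fun a b hab => ?_)
  · have h2 : c.r = d.r := h
    rwa [← h2]
  · have h2 : c.r = d.r := h
    rwa [h2]

/-- The `(m+1)`-fold commutator. -/
def comm (θ : Con A) (m : ℕ) : Con A := commutator (fun _ : Fin m => θ) θ

theorem nfold_eq (θ : Con A) (m : ℕ) : nfold θ (m + 2) = comm θ (m + 1) := rfl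

theorem binComm_eq (θ : Con A) : binComm θ θ = comm θ 1 := rfl

theorem cent_mono {θ θ' δ : Con A} {m : ℕ} (h : θ ≤ θ')
    (hc : Centralizes (fun _ : Fin m => θ') θ' δ) : Centralizes (fun _ : Fin m => θ) θ δ := by
  intro N p hp g a b hab
  refine hc N p hp g a b fun i => ?_
  have := hab i
  rw [lastCases_const] at this ⊢
  exact h _ _ this

theorem comm_mono {θ θ' : Con A} (h : θ ≤ θ') (m : ℕ) : comm θ m ≤ comm θ' m :=
  fun _ _ hab δ hδ => hab δ (cent_mono h hδ)

theorem comm_le (θ : Con A) (m : ℕ) : comm θ m ≤ θ := by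
  intro x y hxy
  refine hxy θ ?_
  intro N p hp g a b hab _
  refine poly_pres θ hp fun i => ?_
  have := hab i
  rw [lastCases_const] at this
  simp only [chooseVec]
  split <;> split
  · exact θ.refl _
  · exact θ.symm this
  · exact this
  · exact θ.refl _

theorem cent_comm (θ : Con A) (m : ℕ) : Centralizes (fun _ : Fin m => θ) θ (comm θ m) := by
  intro N p hp g a b hab hyp δ hδ
  exact hδ N p hp g a b hab fun ε hε => hyp ε hε δ hδ

theorem derived_succ_le (θ : Con A) (k : ℕ) : derived θ (k + 1) ≤ derived θ k :=
  comm_le (derived θ k) 1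

theorem derived_anti (θ : Con A) {i j : ℕ} (h : i ≤ j) : derived θ j ≤ derived θ i := by
  induction h with
  | refl => exact fun _ _ h => h
  | step _ ih => exact fun a b h => ih a b (derived_succ_le θ _ a b h)

theorem solvable_of_cent [Finite A.carrier] {θ δ : Con A} {m : ℕ}
    (hc : Centralizes (fun _ : Fin m => θ) θ δ) : ∃ K, derived θ K ≤ δ := by
  obtain ⟨i, j, hij, he⟩ := Finite.exists_ne_map_eq_of_infinite (derived θ)
  wlog hlt : i < j generalizing i j
  · exact this j i hij.symm he.symm (by omega)
  refine ⟨i, ?_⟩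
  have hρ : derived θ i ≤ binComm (derived θ i) (derived θ i) := by
    intro a b h
    rw [he] at h
    exact derived_anti θ (Nat.succ_le_of_lt hlt) a b h
  have hρθ : derived θ i ≤ θ := derived_anti θ (Nat.zero_le i)
  generalize derived θ i = ρ at hρ hρθ
  by_contra hn
  let S : Set (Con A) := {β | Con.inf ρ δ ≤ β ∧ β ≤ ρ ∧ ¬ ρ ≤ β}
  have hS : S.Nonempty := ⟨Con.inf ρ δ, fun _ _ h => h, fun _ _ h => h.1,
    fun h => hn fun a b hab => (h a b hab).2⟩
  obtain ⟨α, ⟨h1, h2, h3⟩, hmax⟩ := Set.Finite.exists_maximalFor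
    (fun β : Con A => {p : A.carrier × A.carrier | β.r p.1 p.2}) S (Set.toFinite S) hS
  have hcov : Cov α ρ := by
    refine ⟨h2, h3, fun β hβ hβ' => ?_⟩
    by_contra hh
    push Not at hh
    have := hmax (j := β) ⟨fun a b h => hβ a b (h1 a b h), hβ', hh.2⟩
      (fun p hp => hβ _ _ hp)
    exact hh.1 fun a b h => this (show (a, b) ∈ {p : A.carrier × A.carrier | β.r p.1 p.2} from h)
  have H := cubeCond_of_centralizes (ρ := ρ) (α := α) hc hρθ (fun x y h h' => h1 x y ⟨h, h'⟩)
  have hab := abelian_of_cubeCond hcov H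
  exact h3 fun a b h => hρ a b h α hab

theorem eval_pres (β : Con A) {X : Type} (t : Term σ X) {v w : X → A.carrier}
    (h : ∀ i, β.r (v i) (w i)) : β.r (t.eval A v) (t.eval A w) := by
  induction t with
  | var x => exact h x
  | app o t ih => exact β.compat o _ _ ih

theorem eval_hom {φ : A.carrier → B.carrier} (hφ : IsHom A B φ) {X : Type} (t : Term σ X)
    (v : X → A.carrier) : φ (t.eval A v) = t.eval B (fun x => φ (v x)) := by
  induction t with
  | var x => rfl
  | app o t ih =>
    simp only [Term.eval]
    rw [hφ]
    simp only [ih]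

theorem eval_subst {X Y : Type} (t : Term σ X) (s : X → Term σ Y) (v : Y → A.carrier) :
    (t.subst s).eval A v = t.eval A (fun x => (s x).eval A v) := by
  induction t with
  | var x => rfl
  | app o t ih =>
    simp only [Term.subst, Term.eval]
    simp only [ih]

theorem vec3_map {X Y : Type} (f : X → Y) (a b c : X) :
    (fun i => f ((![a, b, c] : Fin 3 → X) i)) = ![f a, f b, f c] := by
  funext i
  fin_cases i <;> rfl

theorem eval_subst3 {Y : Type} (t : Term σ (Fin 3)) (a b c : Term σ Y) (v : Y → A.carrier) :
    (t.subst ![a, b, c]).eval A v = t.eval A ![a.eval A v, b.eval A v, c.eval A v] := by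
  rw [eval_subst, vec3_map (fun s : Term σ Y => s.eval A v)]

theorem eval_hom3 {φ : A.carrier → B.carrier} (hφ : IsHom A B φ) (t : Term σ (Fin 3))
    (a b c : A.carrier) : φ (t.eval A ![a, b, c]) = t.eval B ![φ a, φ b, φ c] := by
  rw [eval_hom hφ, vec3_map φ]

theorem eval_pres3 (β : Con A) (t : Term σ (Fin 3)) {a b c a' b' c' : A.carrier}
    (ha : β.r a a') (hb : β.r b b') (hc : β.r c c') :
    β.r (t.eval A ![a, b, c]) (t.eval A ![a', b', c']) := by
  refine eval_pres β t fun i => ?_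
  fin_cases i
  · exact ha
  · exact hb
  · exact hc

theorem poly_hom {φ : A.carrier → B.carrier} (hφ : IsHom A B φ) {N : ℕ}
    {p : (Fin N → A.carrier) → A.carrier} (hp : IsPolynomial A p) :
    ∃ p', IsPolynomial B p' ∧ ∀ x, φ (p x) = p' (fun i => φ (x i)) := by
  induction hp with
  | proj i => exact ⟨_, IsPolynomial.proj i, fun _ => rfl⟩
  | const a => exact ⟨_, IsPolynomial.const (φ a), fun _ => rfl⟩
  | app o g _ ih =>
    choose p' hp' he using ih
    refine ⟨_, IsPolynomial.app o p' hp', fun x => ?_⟩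
    rw [hφ]
    simp only [he]

theorem map_chooseVec {X Y : Type} (φ : X → Y) {N n : ℕ} (g : Fin N → Fin n) (a b : Fin N → X)
    (ε : Fin n → Bool) :
    (fun i => φ (chooseVec g a b ε i)) = chooseVec g (fun i => φ (a i)) (fun i => φ (b i)) ε := by
  funext i
  simp only [chooseVec]
  split <;> rfl

/-- Preimage of a congruence. -/
def comapCon {φ : A.carrier → B.carrier} (hφ : IsHom A B φ) (δ : Con B) : Con A where
  r a b := δ.r (φ a) (φ b)
  refl _ := δ.refl _
  symm h := δ.symm h
  trans h h' := δ.trans h h'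
  compat o x y h := by
    rw [hφ, hφ]
    exact δ.compat o _ _ h

theorem comm_hom {φ : A.carrier → B.carrier} (hφ : IsHom A B φ) {θ : Con A} {θ' : Con B}
    (h : θ ≤ comapCon hφ θ') (m : ℕ) {x y : A.carrier} (hxy : (comm θ m).r x y) :
    (comm θ' m).r (φ x) (φ y) := by
  intro δ hδ
  refine hxy (comapCon hφ δ) ?_
  intro N p hp g a b hab hyp
  obtain ⟨p', hp', he⟩ := poly_hom hφ hp
  have := hδ N p' hp' g (fun i => φ (a i)) (fun i => φ (b i)) (by
    intro i
    have := hab i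
    rw [lastCases_const] at this ⊢
    exact h _ _ this) (by
    intro ε hε
    have := hyp ε hε
    simp only [comapCon, he, map_chooseVec] at this
    exact this)
  simp only [comapCon, he, map_chooseVec]
  exact this

theorem conPair_le {γ : Con A} {a b : A.carrier} (h : γ.r a b) : conPair A a b ≤ γ := by
  intro x y hxy
  refine hxy γ ?_
  rintro p rfl
  exact h

theorem conPair_mem (a b : A.carrier) : (conPair A a b).r a b := fun _ hc => hc (a, b) rfl

/-! ### Quotients -/

theorem quot_hom (γ : Con A) : IsHom A (quotAlg A γ) (Quotient.mk γ.toSetoid) := by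
  intro o x
  apply Quotient.sound
  refine γ.compat o _ _ fun i => γ.symm ?_
  exact Quotient.mk_out (s := γ.toSetoid) (x i)

theorem quot_poly (γ : Con A) {N : ℕ} {p : (Fin N → (quotAlg A γ).carrier) → (quotAlg A γ).carrier}
    (hp : IsPolynomial (quotAlg A γ) p) :
    ∃ p', IsPolynomial A p' ∧
      ∀ x : Fin N → A.carrier, p (fun i => Quotient.mk γ.toSetoid (x i)) = Quotient.mk γ.toSetoid (p' x) := by
  induction hp with
  | proj i => exact ⟨_, IsPolynomial.proj i, fun _ => rfl⟩
  | const a => exact ⟨_, IsPolynomial.const (Quotient.out a), fun _ => (Quotient.out_eq a).symm⟩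
  | app o g _ ih =>
    choose p' hp' he using ih
    refine ⟨_, IsPolynomial.app o p' hp', fun x => ?_⟩
    rw [quot_hom γ]
    simp only [he]

theorem quot_comm (θ : Con A) (m : ℕ) (h : comm θ m ≤ θ) :
    comm (Con.quot θ (comm θ m) h) m = Con.bot := by
  refine Con.ext' ?_ (fun a b hab => by cases hab; exact Con.refl _ _)
  intro x y hxy
  refine hxy Con.bot ?_
  intro N p hp g a b hab hyp
  obtain ⟨p', hp', he⟩ := quot_poly _ hp
  obtain ⟨a, rfl⟩ : ∃ a' : Fin N → A.carrier, a = fun i => Quotient.mk (comm θ m).toSetoid (a' i) :=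
    ⟨fun i => Quotient.out (a i), funext fun i => (Quotient.out_eq (a i)).symm⟩
  obtain ⟨b, rfl⟩ : ∃ b' : Fin N → A.carrier, b = fun i => Quotient.mk (comm θ m).toSetoid (b' i) :=
    ⟨fun i => Quotient.out (b i), funext fun i => (Quotient.out_eq (b i)).symm⟩
  have hiff : ∀ u v : A.carrier, (Con.bot : Con (quotAlg A (comm θ m))).r
      (Quotient.mk (comm θ m).toSetoid u) (Quotient.mk (comm θ m).toSetoid v) ↔
      (comm θ m).r u v :=
    fun u v => ⟨fun h => Quotient.exact h, fun h => Quotient.sound h⟩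
  have hcv : ∀ ε : Fin (m + 1) → Bool, p (chooseVec g
      (fun i => Quotient.mk (comm θ m).toSetoid (a i))
      (fun i => Quotient.mk (comm θ m).toSetoid (b i)) ε) =
      Quotient.mk (comm θ m).toSetoid (p' (chooseVec g a b ε)) := by
    intro ε
    exact (congrArg p (map_chooseVec (Quotient.mk (comm θ m).toSetoid) g a b ε).symm).trans (he _)
  have := cent_comm θ m N p' hp' g a b (by
    intro i
    have := hab i
    rw [lastCases_const] at this ⊢
    exact this) (by
    intro ε hε
    have := hyp ε hε
    have e1 := hcv (Fin.lastCases (motive := fun _ => Bool) false ε)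
    have e2 := hcv (Fin.lastCases (motive := fun _ => Bool) true ε)
    rw [e1, e2] at this
    exact (hiff _ _).1 this)
  have e1 := hcv (Fin.lastCases (motive := fun _ => Bool) false fun _ => true)
  have e2 := hcv (Fin.lastCases (motive := fun _ => Bool) true fun _ => true)
  rw [e1, e2]
  exact (hiff _ _).2 this

variable {V : Algebra σ → Prop}

theorem quot_mem (hV : IsVariety V) (hA : V A) (γ : Con A) : V (quotAlg A γ) := by
  obtain ⟨E, hE⟩ := hV
  rw [hE] at hA ⊢
  intro e he v
  have hv : v = fun n => Quotient.mk γ.toSetoid (Quotient.out (v n)) :=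
    funext fun n => (Quotient.out_eq (v n)).symm
  rw [hv, ← eval_hom (quot_hom γ), ← eval_hom (quot_hom γ), hA e he]

/-! ### Free algebras -/

theorem free_eval {X Y : Type} (t : Term σ Y) (s : Y → Term σ X) :
    t.eval (freeAlg V X) (fun y => Quotient.mk (vSetoid V X) (s y)) =
      Quotient.mk (vSetoid V X) (t.subst s) := by
  induction t with
  | var x => rfl
  | app o t ih =>
    simp only [Term.eval, Term.subst]
    simp only [ih]
    apply Quotient.sound
    intro A hA v
    simp only [Term.eval]
    congr 1
    funext i
    exact Quotient.mk_out (s := vSetoid V X) ((t i).subst s) A hA v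

theorem free_mem (hV : IsVariety V) (X : Type) : V (freeAlg V X) := by
  have hV' := hV
  obtain ⟨E, hE⟩ := hV
  rw [hE]
  intro e he v
  have hv : v = fun n => Quotient.mk (vSetoid V X) (Quotient.out (v n)) :=
    funext fun n => (Quotient.out_eq (v n)).symm
  rw [hv, free_eval, free_eval]
  apply Quotient.sound
  intro A hA w
  rw [eval_subst, eval_subst]
  exact (hE A).1 hA e he _

theorem free_lift (hA : V A) {X : Type} (v : X → A.carrier) :
    ∃ φ, IsHom (freeAlg V X) A φ ∧ ∀ x, φ (Quotient.mk (vSetoid V X) (Term.var x)) = v x := by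
  refine ⟨Quotient.lift (fun t => t.eval A v) (fun t s h => h A hA v), ?_, fun x => rfl⟩
  intro o x
  show (Term.app o fun i => Quotient.out (x i)).eval A v = _
  simp only [Term.eval]
  congr 1
  funext i
  conv_rhs => rw [← Quotient.out_eq (x i)]
  rfl

/-- Generators of the free algebra on two generators. -/
noncomputable def gen2 (V : Algebra σ → Prop) (i : Fin 2) : (freeAlg V (Fin 2)).carrier :=
  Quotient.mk (vSetoid V (Fin 2)) (Term.var i)

theorem transfer {m : ℕ} (c : Term σ (Fin 3)) (i j l : Fin 2)
    (h : (comm (conPair (freeAlg V (Fin 2)) (gen2 V 0) (gen2 V 1)) m).r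
      (c.eval (freeAlg V (Fin 2)) ![gen2 V i, gen2 V j, gen2 V l]) (gen2 V 0))
    (hA : V A) (v : Fin 2 → A.carrier) :
    (comm (conPair A (v 0) (v 1)) m).r (c.eval A ![v i, v j, v l]) (v 0) := by
  obtain ⟨φ, hφ, hv⟩ := free_lift hA v
  have hv' : ∀ i, φ (gen2 V i) = v i := hv
  have := comm_hom hφ (θ' := conPair A (v 0) (v 1)) (conPair_le (by
    show (conPair A (v 0) (v 1)).r _ _
    rw [hv', hv']
    exact conPair_mem _ _)) m h
  rw [eval_hom3 hφ, hv', hv', hv', hv'] at this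
  exact this

/-! ### Terms -/

/-- Iterated term improving the first identity. -/
def termL (q : Term σ (Fin 3)) : ℕ → Term σ (Fin 3)
  | 0 => Term.var 2
  | (k+1) => q.subst ![Term.var 0, (termL q k).subst ![Term.var 0, Term.var 1, Term.var 1],
      termL q k]

/-- Iterated term improving the second identity. -/
def termR (q : Term σ (Fin 3)) : ℕ → Term σ (Fin 3)
  | 0 => Term.var 0
  | (k+1) => q.subst ![termR q k, (termR q k).subst ![Term.var 1, Term.var 1, Term.var 2],
      Term.var 2]

theorem termL_succ (q : Term σ (Fin 3)) (k : ℕ) (a b c : A.carrier) :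
    (termL q (k+1)).eval A ![a, b, c] =
      q.eval A ![a, (termL q k).eval A ![a, b, b], (termL q k).eval A ![a, b, c]] := by
  simp only [termL, eval_subst3]
  rfl

theorem termR_succ (q : Term σ (Fin 3)) (k : ℕ) (a b c : A.carrier) :
    (termR q (k+1)).eval A ![a, b, c] =
      q.eval A ![(termR q k).eval A ![a, b, c], (termR q k).eval A ![b, b, c], c] := by
  simp only [termR, eval_subst3]
  rfl

theorem limit_step [Finite A.carrier] {θ : Con A} {f : A.carrier → A.carrier} {k : ℕ}
    (hk1 : 1 ≤ k) {x y : A.carrier} (hk : f^[k] (f^[k] y) = f^[k] y)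
    (hf : ∀ j, (derived θ j).r (f^[j] y) x) (m : ℕ) : (comm θ m).r (f^[k] y) x := by
  obtain ⟨K, hK⟩ := solvable_of_cent (cent_comm θ m)
  apply hK
  have h1 : ∀ j, f^[k * (j + 1)] y = f^[k] y := by
    intro j
    induction j with
    | zero => simp
    | succ j ih =>
      rw [show k * (j + 1 + 1) = k + k * (j + 1) by ring, Function.iterate_add_apply, ih, hk]
  rw [← h1 K]
  exact derived_anti θ (by nlinarith) _ _ (hf _)

theorem weakDiff_apply {q : Term σ (Fin 3)} (hq : IsWeakDiffTerm V q) (hA : V A) (γ : Con A)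
    {a b : A.carrier} (h : γ.r a b) :
    (binComm γ γ).r (q.eval A ![a, b, b]) a ∧ (binComm γ γ).r (q.eval A ![b, b, a]) a := by
  obtain ⟨h1, h2⟩ := hq A hA a b
  have hm := comm_mono (conPair_le h) 1
  exact ⟨hm _ _ h1, hm _ _ (Con.symm _ h2)⟩

theorem weakDiff_idem {q : Term σ (Fin 3)} (hq : IsWeakDiffTerm V q) (hA : V A)
    (a : A.carrier) : q.eval A ![a, a, a] = a := by
  have := (weakDiff_apply hq hA (Con.bot : Con A) (a := a) (b := a) rfl).1
  exact comm_le (Con.bot : Con A) 1 _ _ this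

theorem left_step (hV : IsVariety V) (hfin : Finite (freeAlg V (Fin 2)).carrier)
    {q : Term σ (Fin 3)} (hq : IsWeakDiffTerm V q) :
    ∃ c : Term σ (Fin 3), IsWeakDiffTerm V c ∧
      ∀ A : Algebra σ, V A → ∀ a b : A.carrier, ∀ m,
        (comm (conPair A a b) m).r (c.eval A ![a, b, b]) a := by
  obtain ⟨k, hk1, hk⟩ := exists_idem_exp (freeAlg V (Fin 2)).carrier
  have hF := free_mem hV (Fin 2)
  have hleft : ∀ A : Algebra σ, V A → ∀ a b : A.carrier, ∀ m,
        (comm (conPair A a b) m).r ((termL q k).eval A ![a, b, b]) a := by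
    intro A hA a b m
    refine transfer (termL q k) 0 1 1 ?_ hA ![a, b]
    have hev : ∀ j, (termL q j).eval (freeAlg V (Fin 2)) ![gen2 V 0, gen2 V 1, gen2 V 1] =
        (fun w => q.eval (freeAlg V (Fin 2)) ![gen2 V 0, w, w])^[j] (gen2 V 1) := by
      intro j
      induction j with
      | zero => rfl
      | succ j ih => rw [termL_succ, ih, Function.iterate_succ_apply']
    rw [hev]
    refine limit_step hk1 (hk _ _) ?_ m
    intro j
    induction j with
    | zero => exact Con.symm _ (conPair_mem _ _)
    | succ j ih =>
      rw [Function.iterate_succ_apply']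
      exact (weakDiff_apply hq hF _ (Con.symm _ ih)).1
  refine ⟨termL q k, ?_, hleft⟩
  intro A hA a b
  refine ⟨hleft A hA a b 1, Con.symm _ ?_⟩
  have hid : ∀ j, (termL q j).eval A ![b, b, b] = b := by
    intro j
    induction j with
    | zero => rfl
    | succ j ih => rw [termL_succ, ih, weakDiff_idem hq hA]
  have hR : ∀ j, (binComm (conPair A a b) (conPair A a b)).r ((termL q j).eval A ![b, b, a]) a := by
    intro j
    induction j with
    | zero => exact Con.refl _ _
    | succ j ih =>
      rw [termL_succ, hid j]
      exact Con.trans _ (eval_pres3 _ q (Con.refl _ _) (Con.refl _ _) ih)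
        (weakDiff_apply hq hA _ (conPair_mem a b)).2
  exact hR k

theorem right_step (hV : IsVariety V) (hfin : Finite (freeAlg V (Fin 2)).carrier)
    {q : Term σ (Fin 3)} (hq : IsWeakDiffTerm V q)
    (hl : ∀ A : Algebra σ, V A → ∀ a b : A.carrier, ∀ m,
        (comm (conPair A a b) m).r (q.eval A ![a, b, b]) a) :
    ∃ c : Term σ (Fin 3), ∀ A : Algebra σ, V A → ∀ a b : A.carrier, ∀ m,
        (comm (conPair A a b) m).r (c.eval A ![a, b, b]) a ∧
        (comm (conPair A a b) m).r (c.eval A ![b, b, a]) a := by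
  obtain ⟨k, hk1, hk⟩ := exists_idem_exp (freeAlg V (Fin 2)).carrier
  have hF := free_mem hV (Fin 2)
  refine ⟨termR q k, fun A hA a b m => ⟨?_, ?_⟩⟩
  · have hid : ∀ j, (termR q j).eval A ![b, b, b] = b := by
      intro j
      induction j with
      | zero => rfl
      | succ j ih => rw [termR_succ, ih, weakDiff_idem hq hA]
    have hL : ∀ j, (comm (conPair A a b) m).r ((termR q j).eval A ![a, b, b]) a := by
      intro j
      induction j with
      | zero => exact Con.refl _ _
      | succ j ih =>
        rw [termR_succ, hid j]
        exact Con.trans _ (eval_pres3 _ q ih (Con.refl _ _) (Con.refl _ _)) (hl A hA a b m)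
    exact hL k
  · refine transfer (termR q k) 1 1 0 ?_ hA ![a, b]
    have hev : ∀ j, (termR q j).eval (freeAlg V (Fin 2)) ![gen2 V 1, gen2 V 1, gen2 V 0] =
        (fun w => q.eval (freeAlg V (Fin 2)) ![w, w, gen2 V 0])^[j] (gen2 V 1) := by
      intro j
      induction j with
      | zero => rfl
      | succ j ih => rw [termR_succ, ih, Function.iterate_succ_apply']
    rw [hev]
    refine limit_step hk1 (hk _ _) ?_ m
    intro j
    induction j with
    | zero => exact Con.symm _ (conPair_mem _ _)
    | succ j ih =>
      rw [Function.iterate_succ_apply']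
      exact (weakDiff_apply hq hF _ (Con.symm _ ih)).2

end General

theorem three_one {V : Algebra σ → Prop} (hV : IsVariety V)
    (hfin : Finite (freeAlg V (Fin 2)).carrier) (h : ∃ c : Term σ (Fin 3), IsWeakDiffTerm V c) :
    ∃ c : Term σ (Fin 3), ∀ n : ℕ, 2 ≤ n → IsWeakNDiffTerm V n c := by
  obtain ⟨q, hq⟩ := h
  obtain ⟨q', hq', hl⟩ := left_step hV hfin hq
  obtain ⟨c, hc⟩ := right_step hV hfin hq' hl
  refine ⟨c, fun n hn => ?_⟩
  obtain ⟨m, rfl⟩ : ∃ m, n = m + 2 := ⟨n - 2, by omega⟩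
  intro A hA a b
  exact ⟨(hc A hA a b (m + 1)).1, Con.symm _ (hc A hA a b (m + 1)).2⟩

theorem one_two {V : Algebra σ → Prop}
    (h : ∃ c : Term σ (Fin 3), ∀ n : ℕ, 2 ≤ n → IsWeakNDiffTerm V n c) :
    ∃ c : Term σ (Fin 3),
        (∀ A : Algebra σ, V A → ∀ a : A.carrier, c.eval A ![a, a, a] = a) ∧
        (∀ A : Algebra σ, V A → ∀ θ : Con A, (∃ n, 2 ≤ n ∧ nfold θ n = Con.bot) →
          ∀ a b : A.carrier, θ.r a b →
            c.eval A ![a, b, b] = a ∧ c.eval A ![b, b, a] = a) := by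
  obtain ⟨c, hc⟩ := h
  refine ⟨c, fun A hA a => weakDiff_idem (V := V) (hc 2 le_rfl) hA a, ?_⟩
  rintro A hA θ ⟨n, hn, hb⟩ a b hab
  obtain ⟨m, rfl⟩ : ∃ m, n = m + 2 := ⟨n - 2, by omega⟩
  obtain ⟨h1, h2⟩ := hc _ hn A hA a b
  have hm : ∀ x y, (nfold (conPair A a b) (m + 2)).r x y → x = y := by
    intro x y hxy
    have h3 : (nfold θ (m + 2)).r x y := comm_mono (conPair_le hab) (m + 1) _ _ hxy
    rw [hb] at h3
    exact h3
  exact ⟨hm _ _ h1, (hm _ _ h2).symm⟩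

theorem two_one {V : Algebra σ → Prop} (hV : IsVariety V)
    (h : ∃ c : Term σ (Fin 3),
        (∀ A : Algebra σ, V A → ∀ a : A.carrier, c.eval A ![a, a, a] = a) ∧
        (∀ A : Algebra σ, V A → ∀ θ : Con A, (∃ n, 2 ≤ n ∧ nfold θ n = Con.bot) →
          ∀ a b : A.carrier, θ.r a b →
            c.eval A ![a, b, b] = a ∧ c.eval A ![b, b, a] = a)) :
    ∃ c : Term σ (Fin 3), ∀ n : ℕ, 2 ≤ n → IsWeakNDiffTerm V n c := by
  obtain ⟨c, _, hc⟩ := h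
  refine ⟨c, fun n hn => ?_⟩
  obtain ⟨m, rfl⟩ : ∃ m, n = m + 2 := ⟨n - 2, by omega⟩
  intro A hA a b
  obtain ⟨h1, h2⟩ := hc (quotAlg A (comm (conPair A a b) (m + 1))) (quot_mem hV hA _)
    (Con.quot (conPair A a b) (comm (conPair A a b) (m + 1)) (comm_le _ _))
    ⟨m + 2, hn, quot_comm _ _ _⟩
    (Quotient.mk (comm (conPair A a b) (m + 1)).toSetoid a)
    (Quotient.mk (comm (conPair A a b) (m + 1)).toSetoid b) (conPair_mem a b)
  have hq := quot_hom (comm (conPair A a b) (m + 1))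
  have e1 := (eval_hom3 hq c a b b).trans h1
  have e2 := (eval_hom3 hq c b b a).trans h2
  exact ⟨Quotient.exact e1, Con.symm _ (Quotient.exact e2)⟩

/-- Theorem 4.9 of "On Supernilpotent Algebras": for a variety whose 2-generated
free algebra is finite, the following are equivalent: (1) there is a single term
which is a weak `n`-difference term for all `n ≥ 2`; (2) there is an idempotent
ternary term which restricts to a Mal'cev operation on every block of every
supernilpotent congruence of every member; (3) the variety has a weak
difference term. -/
theorem weak_n_difference_characterization {σ : Signature} (V : Algebra σ → Prop)
    (hV : IsVariety V) (hfin : Finite (freeAlg V (Fin 2)).carrier) :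
    ((∃ c : Term σ (Fin 3), ∀ n : ℕ, 2 ≤ n → IsWeakNDiffTerm V n c) ↔
      (∃ c : Term σ (Fin 3),
        (∀ A : Algebra σ, V A → ∀ a : A.carrier, c.eval A ![a, a, a] = a) ∧
        (∀ A : Algebra σ, V A → ∀ θ : Con A, (∃ n, 2 ≤ n ∧ nfold θ n = Con.bot) →
          ∀ a b : A.carrier, θ.r a b →
            c.eval A ![a, b, b] = a ∧ c.eval A ![b, b, a] = a))) ∧
    ((∃ c : Term σ (Fin 3),
        (∀ A : Algebra σ, V A → ∀ a : A.carrier, c.eval A ![a, a, a] = a) ∧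
        (∀ A : Algebra σ, V A → ∀ θ : Con A, (∃ n, 2 ≤ n ∧ nfold θ n = Con.bot) →
          ∀ a b : A.carrier, θ.r a b →
            c.eval A ![a, b, b] = a ∧ c.eval A ![b, b, a] = a)) ↔
      (∃ c : Term σ (Fin 3), IsWeakDiffTerm V c)) := by
  exact ⟨⟨one_two, two_one hV⟩,
    ⟨fun h => (two_one hV h).imp fun c hc => hc 2 le_rfl, fun h => one_two (three_one hV hfin h)⟩⟩

end UA
end

section
/- Let V be a variety with a weak f-term, A ∈ V, and γ,θ,θ₁,…,θₙ congruences of A with each θ_i ≤ θ. Suppose ā₁,…,ā_{n−1},b̄₁,…,b̄_{n−1},ū,v̄ are tuples in A and p(x̄₁,…,x̄ₙ) is a polynomial of A such that: (1) ā_i ≡ b̄_i mod θ_i for i = 1,…,n−1 and ū ≡ v̄ mod θₙ; (2) p(z̄₁,…,z̄_{n−1},ū) ≡ p(z̄₁,…,z̄_{n−1},v̄) mod γ for every (z̄₁,…,z̄_{n−1}) ∈ {ā₁,b̄₁}×⋯×{ā_{n−1},b̄_{n−1}} other than (b̄₁,…,b̄_{n−1}); and (3) T^θ_{n,f}(θ₁,…,θₙ)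 ⊆ γ. Then (p(b̄₁,…,b̄_{n−1},ū), p(b̄₁,…,b̄_{n−1},v̄)) ∈ f(θ) ∘ γ ∘ f(θ). -/
set_option autoImplicit false

namespace UA

variable {σ : Signature}

theorem aux_eval_compat {σ : Signature} {A : Algebra σ} {X : Type} (c : Con A)
    (t : Term σ X) (v w : X → A.carrier) (h : ∀ x, c.r (v x) (w x)) :
    c.r (t.eval A v) (t.eval A w) := by
  induction t with
  | var x => exact h x
  | app o t ih => exact c.compat o _ _ ih

theorem aux_eval3 {σ : Signature} {A : Algebra σ} (c : Con A) (t : Term σ (Fin 3))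
    {x y z x' y' z' : A.carrier} (hx : c.r x x') (hy : c.r y y') (hz : c.r z z') :
    c.r (t.eval A ![x, y, z]) (t.eval A ![x', y', z']) := by
  apply aux_eval_compat
  intro i
  fin_cases i
  · exact hx
  · exact hy
  · exact hz

theorem aux_poly_compat {σ : Signature} {A : Algebra σ} (c : Con A) {n : ℕ}
    {f : (Fin n → A.carrier) → A.carrier} (hf : IsPolynomial A f)
    (v w : Fin n → A.carrier) (h : ∀ x, c.r (v x) (w x)) : c.r (f v) (f w) := by
  induction hf with
  | proj i => exact h i
  | const a => exact c.refl a
  | app o g _ ih => exact c.compat o _ _ ih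

theorem aux_poly_term {σ : Signature} {A : Algebra σ} {n : ℕ} {X : Type} (t : Term σ X)
    (f : X → (Fin n → A.carrier) → A.carrier) (hf : ∀ x, IsPolynomial A (f x)) :
    IsPolynomial A (fun v => t.eval A (fun x => f x v)) := by
  induction t with
  | var x => exact hf x
  | app o t ih => exact IsPolynomial.app o _ ih

theorem aux_poly_term3 {σ : Signature} {A : Algebra σ} {n : ℕ} (t : Term σ (Fin 3))
    {f1 f2 f3 : (Fin n → A.carrier) → A.carrier} (h1 : IsPolynomial A f1)
    (h2 : IsPolynomial A f2) (h3 : IsPolynomial A f3) :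
    IsPolynomial A (fun v => t.eval A ![f1 v, f2 v, f3 v]) := by
  have h := aux_poly_term t ![f1, f2, f3] (by
    intro x
    fin_cases x
    · exact h1
    · exact h2
    · exact h3)
  convert h using 3 with v
  funext x
  fin_cases x <;> rfl

theorem aux_poly_subst {σ : Signature} {A : Algebra σ} {n k : ℕ}
    {f : (Fin n → A.carrier) → A.carrier} (hf : IsPolynomial A f)
    (s : Fin n → (Fin k → A.carrier) → A.carrier) (hs : ∀ i, IsPolynomial A (s i)) :
    IsPolynomial A (fun v => f (fun i => s i v)) := by
  induction hf with
  | proj i => exact hs i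
  | const a => exact IsPolynomial.const a
  | app o g _ ih => exact IsPolynomial.app o _ ih

/-- Resetting the `j`-th group of variables to `a`. -/
def auxReset {β : Type} {N n : ℕ} (g : Fin N → Fin n) (a : Fin N → β) (j : Fin n)
    (x : Fin N → β) : Fin N → β := fun i => if g i = j then a i else x i

theorem auxReset_choose {β : Type} {N n : ℕ} (g : Fin N → Fin n) (a b : Fin N → β) (j : Fin n)
    (ε : Fin n → Bool) :
    auxReset g a j (chooseVec g a b ε) = chooseVec g a b (Function.update ε j false) := by
  funext i
  by_cases h : g i = j
  · simp [auxReset, chooseVec, h]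
  · simp [auxReset, chooseVec, h]

theorem aux_poly_reset {σ : Signature} {A : Algebra σ} {N n : ℕ} (g : Fin N → Fin n)
    (a : Fin N → A.carrier) (j : Fin n) {f : (Fin N → A.carrier) → A.carrier}
    (hf : IsPolynomial A f) : IsPolynomial A (fun x => f (auxReset g a j x)) := by
  refine aux_poly_subst hf (fun i x => auxReset g a j x i) (fun i => ?_)
  by_cases h : g i = j
  · simpa [auxReset, h] using IsPolynomial.const (n := N) (a i)
  · simpa [auxReset, h] using IsPolynomial.proj i

/-- The invariant of the iteration. -/
structure AuxInv {σ : Signature} (A : Algebra σ) (Φ γ : Con A) {m M : ℕ}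
    (g : Fin M → Fin (m + 1)) (a b : Fin M → A.carrier) (w : Fin (m + 1) → Bool)
    (c d : A.carrier) (S : Finset (Fin (m + 1)))
    (h : (Fin M → A.carrier) → A.carrier) : Prop where
  poly : IsPolynomial A h
  absorb : ∀ ε : Fin (m + 1) → Bool, (∃ j ∈ S, ε j = false) → Φ.r (h (chooseVec g a b ε)) c
  base : Φ.r (h (chooseVec g a b w)) c
  cent : ∀ ε : Fin (m + 1) → Bool, (∃ i, i ≠ Fin.last m ∧ ε i = false) →
    γ.r (h (chooseVec g a b ε)) (h (chooseVec g a b (Function.update ε (Fin.last m) false)))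
  top : ∃ k, Φ.r k d ∧ γ.r (h (chooseVec g a b (fun _ => true))) k

theorem AuxInv.step {σ : Signature} {A : Algebra σ} {θ Φ γ : Con A} {m M : ℕ}
    {g : Fin M → Fin (m + 1)} {a b : Fin M → A.carrier} {w : Fin (m + 1) → Bool}
    {c d : A.carrier} {S : Finset (Fin (m + 1))} {h : (Fin M → A.carrier) → A.carrier}
    (p : Term σ (Fin 3))
    (hF : ∀ x y : A.carrier, θ.r x y →
      Φ.r (p.eval A ![x, y, y]) x ∧ Φ.r x (p.eval A ![y, y, x]))
    (hab : ∀ i, θ.r (a i) (b i)) (hcd : θ.r d c)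
    (H : AuxInv A Φ γ g a b w c d S h) (j : Fin (m + 1))
    (hj : ∃ z, γ.r (h (chooseVec g a b (Function.update (fun _ => true) j false))) z ∧ Φ.r z c)
    (hj2 : Φ.r (h (chooseVec g a b (Function.update w j false))) c) :
    AuxInv A Φ γ g a b w c d (insert j S)
      (fun x => p.eval A ![h x, h (auxReset g a j x), h (chooseVec g a b w)]) := by
  have hcube : ∀ ε ε' : Fin (m + 1) → Bool,
      θ.r (h (chooseVec g a b ε)) (h (chooseVec g a b ε')) := by
    intro ε ε'
    apply aux_poly_compat θ H.poly
    intro i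
    unfold chooseVec
    split_ifs
    · exact θ.refl _
    · exact θ.symm (hab i)
    · exact hab i
    · exact θ.refl _
  have hccc : Φ.r (p.eval A ![c, c, c]) c := (hF c c (θ.refl c)).1
  have hxxc : ∀ ε, Φ.r (p.eval A ![h (chooseVec g a b ε), h (chooseVec g a b ε),
      h (chooseVec g a b w)]) c := fun ε =>
    Φ.trans (Φ.symm (hF _ _ (hcube w ε)).2) H.base
  refine ⟨?_, ?_, ?_, ?_, ?_⟩
  · exact aux_poly_term3 p H.poly (aux_poly_reset g a j H.poly) (IsPolynomial.const _)
  · rintro ε ⟨i, hi, hε⟩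
    simp only [auxReset_choose]
    rcases Finset.mem_insert.1 hi with rfl | hi
    · have : Function.update ε i false = ε := by
        rw [← hε]; exact Function.update_eq_self i ε
      rw [this]
      exact hxxc ε
    · refine Φ.trans (aux_eval3 Φ p (H.absorb ε ⟨i, hi, hε⟩) (H.absorb _ ⟨i, hi, ?_⟩) H.base) hccc
      by_cases hij : i = j
      · subst hij; simp
      · simp [Function.update_of_ne hij, hε]
  · simp only [auxReset_choose]
    exact Φ.trans (aux_eval3 Φ p H.base hj2 H.base) hccc
  · rintro ε ⟨i, hi, hε⟩
    simp only [auxReset_choose]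
    refine aux_eval3 γ p (H.cent ε ⟨i, hi, hε⟩) ?_ (γ.refl _)
    by_cases hjl : j = Fin.last m
    · subst hjl
      rw [Function.update_idem]
      exact γ.refl _
    · rw [Function.update_comm (Ne.symm hjl)]
      exact H.cent _ ⟨j, hjl, by simp⟩
  · obtain ⟨k, hk, hγ⟩ := H.top
    obtain ⟨z, hz, hzc⟩ := hj
    refine ⟨p.eval A ![k, z, h (chooseVec g a b w)], ?_, ?_⟩
    · exact Φ.trans (aux_eval3 Φ p hk hzc H.base) (hF d c hcd).1
    · simp only [auxReset_choose]
      exact aux_eval3 γ p hγ hz (γ.refl _)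

/-- Lemma 5.6 of "On Supernilpotent Algebras": the key lemma for varieties with a
weak `f`-term.  Under hypotheses (1)-(3), the two substitution values of `p` at
`(b̄₁,…,b̄_{n-1},ū)` and `(b̄₁,…,b̄_{n-1},v̄)` are related by `f(θ) ∘ γ ∘ f(θ)`. -/
theorem weak_f_term_key_lemma {σ : Signature} (V : Algebra σ → Prop)
    (hV : IsVariety V) (p : Term σ (Fin 3)) (hp : HasWeakFTermVariety V p)
    (A : Algebra σ) (hA : V A)
    (F : Con A → Con A) (hFmono : MonotoneCon F) (hF : IsWeakFTerm A F p)
    {m : ℕ} (θ : Con A) (θs : Fin (m + 1) → Con A) (γ : Con A)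
    (hθs : ∀ i, θs i ≤ θ)
    {M : ℕ} (q : (Fin M → A.carrier) → A.carrier) (hq : IsPolynomial A q)
    (g : Fin M → Fin (m + 1)) (a b : Fin M → A.carrier)
    (h1 : ∀ i, (θs (g i)).r (a i) (b i))
    (h2 : ∀ ε : Fin m → Bool, ε ≠ (fun _ => true) →
      γ.r (q (chooseVec g a b (Fin.lastCases (motive := fun _ => Bool) false ε)))
          (q (chooseVec g a b (Fin.lastCases (motive := fun _ => Bool) true ε))))
    (h3 : ∀ pr ∈ TSet A F θ θs, γ.r pr.1 pr.2) :
    ∃ u v : A.carrier,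
      (F θ).r (q (chooseVec g a b
          (Fin.lastCases (motive := fun _ => Bool) false fun _ => true))) u ∧
      γ.r u v ∧
      (F θ).r v (q (chooseVec g a b
          (Fin.lastCases (motive := fun _ => Bool) true fun _ => true))) := by
  have hlc : ∀ (x : Bool) (ε : Fin m → Bool),
      (Fin.lastCases (motive := fun _ => Bool) false ε : Fin (m + 1) → Bool) =
      Function.update (Fin.lastCases (motive := fun _ => Bool) x ε) (Fin.last m) false := by
    intro x ε
    funext i
    refine Fin.lastCases ?_ (fun i => ?_) i
    · simp
    · rw [Function.update_of_ne (Fin.castSucc_lt_last i).ne]; simp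
  have htop : (Fin.lastCases (motive := fun _ => Bool) true (fun _ : Fin m => true) :
      Fin (m + 1) → Bool) = fun _ => true := by
    funext i
    refine Fin.lastCases ?_ (fun i => ?_) i <;> simp
  rw [hlc true, htop]
  set w : Fin (m + 1) → Bool := Function.update (fun _ => true) (Fin.last m) false with hw
  have hab : ∀ i, θ.r (a i) (b i) := fun i => hθs _ _ _ (h1 i)
  have hcd : θ.r (q (chooseVec g a b (fun _ => true))) (q (chooseVec g a b w)) := by
    apply aux_poly_compat θ hq
    intro i
    unfold chooseVec
    split_ifs
    · exact θ.refl _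
    · exact θ.symm (hab i)
    · simp_all
    · simp_all
  have hwl : Function.update w (Fin.last m) false = w := by rw [hw, Function.update_idem]
  have key : ∀ S : Finset (Fin (m + 1)), ∃ h, AuxInv A (F θ) γ g a b w
      (q (chooseVec g a b w)) (q (chooseVec g a b (fun _ => true)))
      (insert (Fin.last m) S) h := by
    intro S
    induction S using Finset.induction_on with
    | empty =>
      have H0 : AuxInv A (F θ) γ g a b w
          (q (chooseVec g a b w)) (q (chooseVec g a b (fun _ => true))) ∅ q := by
        refine ⟨hq, ?_, (F θ).refl _, ?_, ⟨_, (F θ).refl _, γ.refl _⟩⟩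
        · rintro ε ⟨j, hj, -⟩
          simp at hj
        · rintro ε ⟨i, hi, hε⟩
          obtain ⟨i, rfl⟩ := Fin.exists_castSucc_eq.2 hi
          have hne : (fun i : Fin m => ε i.castSucc) ≠ fun _ => true := by
            intro h
            have := congrFun h i
            simp [hε] at this
          have h := h2 _ hne
          have e : ∀ x, ε (Fin.last m) = x → (Fin.lastCases (motive := fun _ => Bool) x
              (fun i : Fin m => ε i.castSucc) : Fin (m + 1) → Bool) = ε := by
            intro x hx
            funext i
            refine Fin.lastCases ?_ (fun i => ?_) i <;> simp [hx]
          rcases hx : ε (Fin.last m) with _ | _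
          · have : Function.update ε (Fin.last m) false = ε := by
              rw [← hx]; exact Function.update_eq_self _ ε
            rw [this]
            exact γ.refl _
          · rw [hlc true, e true hx] at h
            exact γ.symm h
      exact ⟨_, H0.step p (hF θ) hab hcd (Fin.last m)
        ⟨_, γ.refl _, (F θ).refl _⟩ (by rw [hwl]; exact (F θ).refl _)⟩
    | insert j S _ ih =>
      obtain ⟨h, H⟩ := ih
      have hlast : ∀ x : Fin (m + 1) → Bool, x (Fin.last m) = false →
          (F θ).r (h (chooseVec g a b x)) (q (chooseVec g a b w)) := fun x hx =>
        H.absorb x ⟨_, Finset.mem_insert_self _ _, hx⟩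
      have hwj : Function.update w j false (Fin.last m) = false := by
        by_cases hj : Fin.last m = j
        · subst hj; simp
        · rw [Function.update_of_ne hj, hw]; simp
      rw [Finset.insert_comm]
      refine ⟨_, H.step p (hF θ) hab hcd j ?_ (hlast _ hwj)⟩
      by_cases hj : j = Fin.last m
      · subst hj
        exact ⟨_, γ.refl _, hlast _ (by simp)⟩
      · exact ⟨_, H.cent _ ⟨j, hj, by simp⟩, hlast _ (by simp)⟩
  obtain ⟨h, H⟩ := key Finset.univ
  obtain ⟨k, hk, hγ⟩ := H.top
  have hfa : chooseVec g a b (fun _ => false) = a := by funext i; simp [chooseVec]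
  have htb : chooseVec g a b (fun _ => true) = b := by funext i; simp [chooseVec]
  have hac : (F θ).r (h a) (q (chooseVec g a b w)) := by
    have := H.absorb (fun _ => false) ⟨Fin.last m, by simp, rfl⟩
    rwa [hfa] at this
  have hT := h3 (h b, h a) ⟨M, h, H.poly, g, a, b, h1, fun ε ⟨j, hj⟩ =>
    (F θ).trans (H.absorb ε ⟨j, by simp, hj⟩) ((F θ).symm hac), rfl⟩
  rw [htb] at hγ
  exact ⟨h a, k, (F θ).symm hac, γ.trans (γ.symm hT) hγ, hk⟩

end UA
end
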